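/- Every subshift of quasi-finite type Σ admits at least one and at most finitely many maximum measures. -/

import Mathlib

open Filter Set MeasureTheory

namespace QFTPaper

variable {A : Type*} {B : Type*}

/-- The left shift on bi-infinite sequences over the alphabet `A`. -/
def shift (x : ℤ → A) : ℤ → A := fun n => x (n + 1)

/-- A subshift: a closed, shift-invariant subset of `A^ℤ`. -/
def IsSubshift [TopologicalSpace A] (X : Set (ℤ → A)) : Prop :=
  IsClosed X ∧ shift '' X = X

/-- The finite word `w` occurs in `x` at position `k`. -/
def OccursAt (w : List A) (x : ℤ → A) (k : ℤ) : Prop :=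
  ∀ i : Fin w.length, x (k + (i : ℕ)) = w.get i

/-- The language of `X`: words of length `n` occurring in elements of `X`
(at position `0`, which is no restriction by shift-invariance). -/
def Lang (X : Set (ℤ → A)) (n : ℕ) : Set (List A) :=
  { w | w.length = n ∧ ∃ x ∈ X, OccursAt w x 0 }

/-- Topological entropy of a subshift. -/
noncomputable def hTop (X : Set (ℤ → A)) : ℝ :=
  limsup (fun n : ℕ => Real.log (Nat.card ↥(Lang X n)) / (n : ℝ)) atTop

/-- Follower set of the finite word `w = A₋ₙ…A₀` (listed from `A₋ₙ` to `A₀`):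
the set of one-sided sequences `B₀B₁B₂…` with `B ∈ X` and `B₋ₙ…B₀ = A₋ₙ…A₀`,
realized by requiring `w` to occur in `B` at positions `0,…,n` and reading off
the tail of `B` starting at the position of the last letter of `w`.
For the empty word this gives `X₊` (by shift-invariance). -/
def fol (X : Set (ℤ → A)) (w : List A) : Set (ℕ → A) :=
  { y | ∃ B ∈ X, (∀ i : Fin w.length, B ((i : ℕ) : ℤ) = w.get i) ∧
        ∀ k : ℕ, y k = B ((w.length : ℤ) - 1 + (k : ℤ)) }

/-- `w = A₋ₙ…A₀` is a left constraint:
`∅ ≠ fol(A₋ₙ…A₀) ⊊ fol(A₋ₙ₊₁…A₀)`. -/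
def IsLeftConstraint (X : Set (ℤ → A)) (w : List A) : Prop :=
  w ≠ [] ∧ fol X w ≠ ∅ ∧ fol X w ⊂ fol X w.tail

/-- `𝒞(X, n)`: the set of left constraints of length `n`. -/
def LC (X : Set (ℤ → A)) (n : ℕ) : Set (List A) :=
  { w | w.length = n ∧ IsLeftConstraint X w }

/-- The left constraint entropy `h_𝒞(X) = limsup (1/n) log⁺ #𝒞(X,n)`. -/
noncomputable def hC (X : Set (ℤ → A)) : ℝ :=
  limsup (fun n : ℕ => max 0 (Real.log (Nat.card ↥(LC X n))) / (n : ℝ)) atTop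

/-- The time-reversed subshift `X̄`. -/
def rev (X : Set (ℤ → A)) : Set (ℤ → A) :=
  (fun x : ℤ → A => fun n : ℤ => x (-n)) '' X

/-- The symmetric constraint entropy `h_𝒮𝒞(X) = min (h_𝒞(X), h_𝒞(X̄))`. -/
noncomputable def hSC (X : Set (ℤ → A)) : ℝ := min (hC X) (hC (rev X))

/-- Subshift of quasi-finite type: `h_𝒮𝒞(X) < h_top(X)`. -/
def IsQFT [TopologicalSpace A] (X : Set (ℤ → A)) : Prop :=
  IsSubshift X ∧ hSC X < hTop X

/-- The word `B₋ₘ…B₀` read off from a one-sided past `b` (where `b j = B₋ⱼ`). -/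
def wordOf (b : ℕ → A) (m : ℕ) : List A :=
  (List.range (m + 1)).map fun j => b (m - j)

/-- An extendable left constraint: a left constraint `A₋ₙ…A₀` which admits a
one-sided past `B` extending it such that `B₋ₘ…B₀` is again a left constraint
for infinitely many `m`. -/
def IsExtendable (X : Set (ℤ → A)) (w : List A) : Prop :=
  IsLeftConstraint X w ∧
  ∃ b : ℕ → A, wordOf b (w.length - 1) = w ∧
    ∀ N : ℕ, ∃ m, N ≤ m ∧ IsLeftConstraint X (wordOf b m)

/-- `𝒞*(X, n)`: the set of extendable left constraints of length `n`. -/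
def ELC (X : Set (ℤ → A)) (n : ℕ) : Set (List A) :=
  { w | w.length = n ∧ IsExtendable X w }

/-- The extendable left constraint entropy `h*_𝒞(X)`. -/
noncomputable def hCstar (X : Set (ℤ → A)) : ℝ :=
  limsup (fun n : ℕ => Real.log (Nat.card ↥(ELC X n)) / (n : ℝ)) atTop

/-- `h*_𝒮𝒞(X) = min (h*_𝒞(X), h*_𝒞(X̄))`. -/
noncomputable def hSCstar (X : Set (ℤ → A)) : ℝ := min (hCstar X) (hCstar (rev X))

/-- Subshift of weak quasi-finite type: `h*_𝒮𝒞(X) < h_top(X)`. -/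
def IsWeakQFT [TopologicalSpace A] (X : Set (ℤ → A)) : Prop :=
  IsSubshift X ∧ hSCstar X < hTop X

/-- Subshift of finite type: defined by excluding a finite set of finite words. -/
def IsSFT (X : Set (ℤ → A)) : Prop :=
  ∃ F : Finset (List A), X = { x | ∀ w ∈ F, ∀ k : ℤ, ¬ OccursAt w x k }

/-- Sofic subshift: the image of an SFT under a continuous shift-commuting map. -/
def IsSofic [TopologicalSpace A] (X : Set (ℤ → A)) : Prop :=
  ∃ (B : Type) (_ : Fintype B) (Y : Set (ℤ → B)) (π : (ℤ → B) → (ℤ → A)),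
    IsSFT Y ∧
    (letI : TopologicalSpace B := ⊥
     Continuous π) ∧
    (∀ x : ℤ → B, π (shift x) = shift (π x)) ∧ π '' Y = X


/-- Topological conjugacy of subshifts: a homeomorphism commuting with the shifts. -/
def Conjugate [TopologicalSpace A] [TopologicalSpace B]
    (X : Set (ℤ → A)) (Y : Set (ℤ → B)) : Prop :=
  ∃ φ : X ≃ₜ Y, ∀ x x' : X, (x' : ℤ → A) = shift (x : ℤ → A) →
    (φ x' : ℤ → B) = shift (φ x : ℤ → B)

/-- The cylinder of a word of length `n` placed at positions `0,…,n-1`. -/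
def cylSet (n : ℕ) (w : Fin n → A) : Set (ℤ → A) :=
  { x | ∀ i : Fin n, x ((i : ℕ) : ℤ) = w i }

/-- Entropy of the partition of `A^ℤ` into cylinders of length `n`. -/
noncomputable def blockEntropy [Fintype A] [MeasurableSpace A]
    (μ : Measure (ℤ → A)) (n : ℕ) : ℝ :=
  ∑ w : Fin n → A, Real.negMulLog ((μ (cylSet n w)).toReal)

/-- Kolmogorov–Sinai entropy of a shift-invariant measure on `A^ℤ`,
computed with the natural (generating) partition into cylinders. -/
noncomputable def KSEntropy [Fintype A] [MeasurableSpace A]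
    (μ : Measure (ℤ → A)) : ℝ :=
  ⨅ n : ℕ, blockEntropy μ (n + 1) / (n + 1)

/-- A maximum measure: an ergodic shift-invariant Borel probability measure
carried by `X` whose Kolmogorov–Sinai entropy equals the topological entropy of `X`. -/
def IsMaxMeasure [Fintype A] [MeasurableSpace A]
    (X : Set (ℤ → A)) (μ : Measure (ℤ → A)) : Prop :=
  IsProbabilityMeasure μ ∧ μ Xᶜ = 0 ∧ Ergodic shift μ ∧ KSEntropy μ = hTop X

/-- The number of points of `X` fixed by the `n`-th power of the shift. -/
noncomputable def perCount (X : Set (ℤ → A)) (n : ℕ) : ℕ :=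
  Nat.card {x : ℤ → A | x ∈ X ∧ shift^[n] x = x}

/-!
Replacing `X` by its time reversal if necessary, assume `hC X < hTop X`. If almost every past ended
in a left constraint of length at least `N`, for some large `N`, these constraints would encode
typical words at a rate just above `hC X`. A measure of entropy `hTop X` must therefore charge the
points `x` for which `fol X (past x n)` is constant for `n ≥ N`. The eventual value of this follower
set is the *state* of the point; reading a letter moves one state to the next deterministically, and
only the finitely many states `fol X w` with `w.length = N` are involved.

Fix one such state `S` and weight each word by `e ^ (-hTop X * length)`. The first passage
generating function `F` from a state to `S` is superharmonic for the state graph, so its Doob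
transform predicts the next letter with expected logarithmic loss at most `hTop X`. Gibbs'
inequality forces an invariant measure of entropy `hTop X` that visits `S` almost surely to have
exactly these transition probabilities, and cutting orbits at their last visit to `S` then shows
that it is unique. Uniqueness implies ergodicity, since conditioning on an invariant set preserves
maximality of the entropy. Hence there is at most one maximum measure for each of the finitely many
`S`, and conditioning any invariant measure of entropy `hTop X` on the orbit of a state that it
charges produces one.
-/

/-! ### Shifts and words -/

section Words

variable {A : Type*} {X : Set (ℤ → A)}

/-- The `t`-th power of the left shift, for an arbitrary integer `t`. -/
def shiftBy (t : ℤ) (x : ℤ → A) : ℤ → A := fun n => x (n + t)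

/-- The word `xₐ … xₐ₊ₙ₋₁` as a function on `Fin n`, the form used by `blockEntropy`. -/
def window (a : ℤ) (n : ℕ) (x : ℤ → A) : Fin n → A := fun i => x (a + (i : ℕ))

/-- The word `xₐ … xₐ₊ₙ₋₁` as a list, the form used by `Lang` and `fol`. -/
def block (x : ℤ → A) (a : ℤ) (n : ℕ) : List A := List.ofFn (window a n x)

/-- The word `x₁₋ₙ … x₀` of length `n` ending at the origin. -/
def past (x : ℤ → A) (n : ℕ) : List A := block x (1 - (n : ℤ)) n

@[simp] lemma shiftBy_apply (t : ℤ) (x : ℤ → A) (n : ℤ) : shiftBy t x n = x (n + t) := rfl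

@[simp] lemma shiftBy_zero (x : ℤ → A) : shiftBy 0 x = x := by
  funext n; simp

lemma shiftBy_shiftBy (s t : ℤ) (x : ℤ → A) : shiftBy s (shiftBy t x) = shiftBy (s + t) x := by
  funext n; simp [add_assoc]

lemma shift_shiftBy (t : ℤ) (x : ℤ → A) : shift (shiftBy t x) = shiftBy (t + 1) x := by
  rw [add_comm]; exact shiftBy_shiftBy 1 t x

lemma iterate_shiftBy (t : ℤ) (n : ℕ) (x : ℤ → A) : (shiftBy t)^[n] x = shiftBy (n * t) x := by
  induction n with
  | zero => simp
  | succ k ih =>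
    rw [Function.iterate_succ_apply', ih, shiftBy_shiftBy, Nat.cast_succ, add_one_mul, add_comm]

lemma shift_injective : Function.Injective (shift : (ℤ → A) → ℤ → A) := fun x y h => by
  funext n; simpa [shift] using congrFun h (n - 1)

lemma shiftBy_mem_iff (hX : shift '' X = X) (t : ℤ) {x : ℤ → A} : shiftBy t x ∈ X ↔ x ∈ X := by
  have shift_mem_iff (y : ℤ → A) : shift y ∈ X ↔ y ∈ X := by
    conv_lhs => rw [← hX]
    exact shift_injective.mem_set_image
  induction t using Int.induction_on with
  | zero => simp
  | succ n ih => rw [← shift_shiftBy]; exact (shift_mem_iff _).trans ih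
  | pred n ih => rwa [← shift_mem_iff, shift_shiftBy, sub_add_cancel]

@[simp] lemma length_block (x : ℤ → A) (a : ℤ) (n : ℕ) : (block x a n).length = n := by
  simp [block]

@[simp] lemma block_zero (x : ℤ → A) (a : ℤ) : block x a 0 = [] := by
  simp [block]

@[simp] lemma length_past (x : ℤ → A) (n : ℕ) : (past x n).length = n := length_block ..

@[simp] lemma past_zero (x : ℤ → A) : past x 0 = [] := block_zero ..

lemma block_eq_ofFn_iff {x : ℤ → A} {a : ℤ} {n : ℕ} {w : Fin n → A} :
    block x a n = List.ofFn w ↔ window a n x = w :=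
  List.ofFn_inj

lemma block_eq_block_iff {x y : ℤ → A} {a b : ℤ} {n : ℕ} :
    block x a n = block y b n ↔ ∀ i < n, x (a + i) = y (b + i) := by
  rw [block, block, List.ofFn_inj, funext_iff]
  exact ⟨fun h i hi => h ⟨i, hi⟩, fun h i => h i i.2⟩

lemma block_length_eq_iff {x : ℤ → A} {a : ℤ} {w : List A} :
    block x a w.length = w ↔ OccursAt w x a := by
  conv_lhs => rhs; rw [← List.ofFn_get w]
  rw [block_eq_ofFn_iff, funext_iff]
  rfl

lemma block_add (x : ℤ → A) (a : ℤ) (m n : ℕ) :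
    block x a (m + n) = block x a m ++ block x (a + m) n := by
  rw [block, block, block, ← List.ofFn_fin_append]
  congr 1
  funext i
  cases i using Fin.addCases <;> simp [window, add_assoc]

lemma block_succ (x : ℤ → A) (a : ℤ) (n : ℕ) :
    block x a (n + 1) = block x a n ++ [x (a + n)] := by
  rw [block_add]; simp [block, window]

lemma block_shiftBy (t : ℤ) (x : ℤ → A) (a : ℤ) (n : ℕ) :
    block (shiftBy t x) a n = block x (a + t) n :=
  block_eq_block_iff.2 fun i _ => by rw [shiftBy_apply, add_right_comm]

lemma take_block (x : ℤ → A) (a : ℤ) {m n : ℕ} (h : m ≤ n) :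
    (block x a n).take m = block x a m := by
  obtain ⟨k, rfl⟩ := Nat.exists_eq_add_of_le h
  rw [block_add]; simp

lemma drop_block (x : ℤ → A) (a : ℤ) (m n : ℕ) :
    (block x a (m + n)).drop m = block x (a + m) n := by
  rw [block_add]; simp

lemma past_shiftBy_add (x : ℤ → A) (n m : ℕ) :
    past (shiftBy m x) (n + m) = past x n ++ block x 1 m := by
  rw [past, past, block_shiftBy, block_add]
  congr 2 <;> (push_cast; ring)

lemma past_shiftBy_add' (x : ℤ → A) (k m : ℕ) :
    past (shiftBy (k + m : ℕ) x) m = block x (1 + k) m := by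
  rw [past, block_shiftBy]; congr 1; push_cast; ring

lemma drop_past (x : ℤ → A) {m n : ℕ} (h : m ≤ n) : (past x n).drop (n - m) = past x m := by
  obtain ⟨k, rfl⟩ := Nat.exists_eq_add_of_le h
  rw [add_tsub_cancel_left, add_comm m k, past, drop_block, past]
  congr 1; push_cast; ring

lemma tail_past (x : ℤ → A) (n : ℕ) : (past x (n + 1)).tail = past x n := by
  rw [← List.drop_one, ← drop_past x n.le_succ]; simp

end Words

section FollowerSets

variable {A : Type*} {X : Set (ℤ → A)}

/-- The futures left over from the futures in `S` once the word `u` has been read. As with `fol`,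
the letter at position `0` of a future is the last letter already read. -/
def leftQuotient (S : Set (ℕ → A)) (u : List A) : Set (ℕ → A) :=
  u.foldl (fun T a => (fun y k => y (k + 1)) '' {y ∈ T | y 1 = a}) S

@[simp] lemma leftQuotient_nil (S : Set (ℕ → A)) : leftQuotient S [] = S := rfl

lemma leftQuotient_append (S : Set (ℕ → A)) (u v : List A) :
    leftQuotient S (u ++ v) = leftQuotient (leftQuotient S u) v :=
  List.foldl_append

lemma mem_fol_iff_block {w : List A} {y : ℕ → A} :
    y ∈ fol X w ↔ ∃ B ∈ X, block B 0 w.length = w ∧ ∀ k : ℕ, y k = B (w.length - 1 + k) := by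
  simp only [block_length_eq_iff, OccursAt, zero_add]
  rfl

lemma mem_fol_iff_past (hX : shift '' X = X) {w : List A} {y : ℕ → A} :
    y ∈ fol X w ↔ ∃ B ∈ X, past B w.length = w ∧ ∀ k : ℕ, y k = B k := by
  rw [mem_fol_iff_block]
  constructor <;> rintro ⟨B, hB, hw, hy⟩
  · refine ⟨shiftBy (w.length - 1) B, (shiftBy_mem_iff hX _).2 hB, ?_, fun k => ?_⟩
    · rw [past, block_shiftBy]; simpa using hw
    · rw [hy, shiftBy_apply, add_comm]
  · refine ⟨shiftBy (1 - w.length) B, (shiftBy_mem_iff hX _).2 hB, ?_, fun k => ?_⟩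
    · rw [block_shiftBy, zero_add]; exact hw
    · rw [hy, shiftBy_apply]; congr 1; ring

lemma fol_append (X : Set (ℤ → A)) (w u : List A) :
    fol X (w ++ u) = leftQuotient (fol X w) u := by
  induction u using List.reverseRecOn with
  | nil => simp
  | append_singleton u a ih =>
    rw [← List.append_assoc, leftQuotient_append, ← ih]
    generalize w ++ u = v
    ext z
    simp only [leftQuotient, List.foldl_cons, List.foldl_nil, mem_image, mem_ofPred_eq,
      mem_fol_iff_block, List.length_append, List.length_singleton, block_succ, zero_add]
    constructor
    · rintro ⟨B, hB, hw, hz⟩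
      obtain ⟨hv, ha⟩ := List.append_inj hw (length_block ..)
      refine ⟨fun k => B (v.length - 1 + k), ⟨⟨B, hB, hv, fun _ => rfl⟩, ?_⟩, funext fun k => ?_⟩
      · simpa using ha
      · simp only [hz]; congr 1; push_cast; ring
    · rintro ⟨y, ⟨⟨B, hB, hv, hy⟩, rfl⟩, rfl⟩
      refine ⟨B, hB, by rw [hv, hy]; simp, fun k => ?_⟩
      simp only [hy]; congr 1; push_cast; ring

lemma fol_subset_fol_tail (hX : shift '' X = X) (w : List A) : fol X w ⊆ fol X w.tail := by
  cases w with
  | nil => rfl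
  | cons a w =>
    intro y hy
    obtain ⟨B, hB, hw, hy⟩ := (mem_fol_iff_past hX).1 hy
    exact (mem_fol_iff_past hX).2 ⟨B, hB, by rw [List.tail_cons, ← tail_past B, ← List.length_cons,
      hw, List.tail_cons], hy⟩

lemma fol_past_nonempty (hX : shift '' X = X) {x : ℤ → A} (hx : x ∈ X) (n : ℕ) :
    (fol X (past x n)).Nonempty :=
  ⟨fun k => x k, (mem_fol_iff_past hX).2 ⟨x, hx, by simp, fun _ => rfl⟩⟩

lemma mem_Lang_iff {n : ℕ} {w : List A} :
    w ∈ Lang X n ↔ w.length = n ∧ ∃ x ∈ X, block x 0 n = w := by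
  refine and_congr_right ?_
  rintro rfl
  simp only [block_length_eq_iff]

lemma block_mem_Lang (hX : shift '' X = X) {x : ℤ → A} (hx : x ∈ X) (a : ℤ) (n : ℕ) :
    block x a n ∈ Lang X n :=
  mem_Lang_iff.2 ⟨length_block .., shiftBy a x, (shiftBy_mem_iff hX a).2 hx, by
    rw [block_shiftBy, zero_add]⟩

lemma mem_Lang_of_fol_append_nonempty (hX : shift '' X = X) {w u : List A}
    (h : (fol X (w ++ u)).Nonempty) : u ∈ Lang X u.length := by
  obtain ⟨y, hy⟩ := h
  obtain ⟨B, hB, hwu, -⟩ := (mem_fol_iff_past hX).1 hy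
  have hu : past B u.length = u := by
    rw [← drop_past B (show u.length ≤ (w ++ u).length by simp), hwu]; simp
  have := block_mem_Lang hX hB (1 - u.length) u.length
  rwa [show block B (1 - u.length) u.length = u from hu] at this

end FollowerSets

section Measurability

variable {A : Type*} [MeasurableSpace A] {μ : Measure (ℤ → A)}

/-- The left shift as a measurable equivalence. -/
def shiftEquiv : (ℤ → A) ≃ᵐ (ℤ → A) :=
  MeasurableEquiv.arrowCongr' (Equiv.addRight (-1)) (MeasurableEquiv.refl A)

lemma coe_shiftEquiv : ⇑(shiftEquiv : (ℤ → A) ≃ᵐ (ℤ → A)) = shift := by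
  funext x n
  simp [shiftEquiv, shift, MeasurableEquiv.arrowCongr', Equiv.arrowCongr']

lemma coe_shiftEquiv_symm : ⇑(shiftEquiv : (ℤ → A) ≃ᵐ (ℤ → A)).symm = shiftBy (-1) := by
  funext x
  rw [MeasurableEquiv.symm_apply_eq, coe_shiftEquiv, shift_shiftBy]
  simp

lemma measurable_shiftBy (t : ℤ) : Measurable (shiftBy t : (ℤ → A) → ℤ → A) :=
  measurable_pi_lambda _ fun _ => measurable_pi_apply _

lemma measurePreserving_shiftBy (hμ : MeasurePreserving shift μ μ) (t : ℤ) :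
    MeasurePreserving (shiftBy t) μ μ := by
  have hsymm : MeasurePreserving (shiftBy (-1)) μ μ :=
    coe_shiftEquiv_symm (A := A) ▸ MeasurePreserving.symm shiftEquiv (coe_shiftEquiv (A := A) ▸ hμ)
  induction t using Int.induction_on with
  | zero =>
    convert MeasurePreserving.id μ using 1
    exact funext shiftBy_zero
  | succ n ih =>
    convert hμ.comp ih using 1
    exact funext fun x => (shift_shiftBy _ x).symm
  | pred n ih =>
    convert hsymm.comp ih using 1
    exact funext fun x => by
      rw [Function.comp_apply, shiftBy_shiftBy, neg_add_eq_sub]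

lemma measure_shiftBy_preimage (hμ : MeasurePreserving shift μ μ) (t : ℤ) {s : Set (ℤ → A)}
    (hs : MeasurableSet s) : μ (shiftBy t ⁻¹' s) = μ s :=
  (measurePreserving_shiftBy hμ t).measure_preimage hs.nullMeasurableSet

lemma measurable_window (a : ℤ) (n : ℕ) : Measurable (window a n : (ℤ → A) → Fin n → A) :=
  measurable_pi_lambda _ fun _ => measurable_pi_apply _

lemma measurableSet_block [Finite A] [MeasurableSingletonClass A] (a : ℤ) (n : ℕ)
    (P : List A → Prop) : MeasurableSet {x : ℤ → A | P (block x a n)} :=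
  measurable_window a n (Set.toFinite {w : Fin n → A | P (List.ofFn w)}).measurableSet

lemma measurableSet_past [Finite A] [MeasurableSingletonClass A] (n : ℕ)
    (P : List A → Prop) : MeasurableSet {x : ℤ → A | P (past x n)} :=
  measurableSet_block _ _ P

end Measurability

/-! ### Shannon entropy -/

section Entropy

lemma negMulLog_add_le {x y : ℝ} (hx : 0 ≤ x) (hy : 0 ≤ y) :
    Real.negMulLog (x + y) ≤ Real.negMulLog x + Real.negMulLog y := by
  have key (x y : ℝ) (hx : 0 ≤ x) (hy : 0 ≤ y) : x * Real.log x ≤ x * Real.log (x + y) := by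
    rcases hx.eq_or_lt with rfl | hx
    · simp
    · gcongr; linarith
  have h₁ := key x y hx hy
  have h₂ := key y x hy hx
  rw [add_comm y x] at h₂
  simp only [Real.negMulLog]
  linarith

lemma negMulLog_le_neg_mul_log_add_sub {p q : ℝ} (hp : 0 ≤ p) (hq : 0 ≤ q) (hpq : q = 0 → p = 0) :
    Real.negMulLog p ≤ p * -Real.log q + q - p := by
  rcases hp.eq_or_lt with rfl | hp
  · simpa using hq
  have hq : 0 < q := hq.lt_of_ne fun h => hp.ne' (hpq h.symm)
  have h := mul_le_mul_of_nonneg_left (Real.log_le_sub_one_of_pos (div_pos hq hp)) hp.le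
  rw [Real.log_div hq.ne' hp.ne', mul_sub, mul_sub_one, mul_div_cancel₀ _ hp.ne'] at h
  rw [Real.negMulLog]
  linarith

variable {Ω ι κ : Type*} [MeasurableSpace Ω] [Fintype ι] [Fintype κ] {μ : Measure Ω}

/-- The Shannon entropy of the finite-valued random variable `Y`. -/
noncomputable def shannonEntropy (μ : Measure Ω) (Y : Ω → ι) : ℝ :=
  ∑ i, Real.negMulLog (μ.real (Y ⁻¹' {i}))

lemma shannonEntropy_nonneg [IsProbabilityMeasure μ] (Y : Ω → ι) : 0 ≤ shannonEntropy μ Y :=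
  Finset.sum_nonneg fun _ _ => Real.negMulLog_nonneg measureReal_nonneg measureReal_le_one

lemma shannonEntropy_equiv_comp (e : ι ≃ κ) (Y : Ω → ι) :
    shannonEntropy μ (e ∘ Y) = shannonEntropy μ Y := by
  refine (Fintype.sum_equiv e _ _ fun i => ?_).symm
  congr 2
  ext; simp

lemma shannonEntropy_comp_measurePreserving [MeasurableSpace ι] [MeasurableSingletonClass ι]
    {Ω' : Type*} [MeasurableSpace Ω'] {ν : Measure Ω'} {T : Ω → Ω'} (hT : MeasurePreserving T μ ν)
    {Y : Ω' → ι} (hY : Measurable Y) : shannonEntropy μ (Y ∘ T) = shannonEntropy ν Y :=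
  Finset.sum_congr rfl fun i _ => by
    rw [Measure.real, preimage_comp,
      hT.measure_preimage (hY (measurableSet_singleton i)).nullMeasurableSet, Measure.real]

lemma ae_measureReal_fiber_pos {β : Type*} [Countable β] [IsFiniteMeasure μ] (Y : Ω → β) :
    ∀ᵐ ω ∂μ, 0 < μ.real (Y ⁻¹' {Y ω}) := by
  have h : ∀ᵐ ω ∂μ, ∀ i, μ (Y ⁻¹' {i}) = 0 → Y ω ≠ i :=
    ae_all_iff.2 fun i => by
      by_cases hi : μ (Y ⁻¹' {i}) = 0
      · filter_upwards [measure_eq_zero_iff_ae_notMem.1 hi] with ω hω _ using hω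
      · exact .of_forall fun _ h => absurd h hi
  filter_upwards [h] with ω hω
  exact ENNReal.toReal_pos (fun h0 => hω _ h0 rfl) (measure_ne_top _ _)

section Finite

variable [MeasurableSpace ι] [MeasurableSingletonClass ι] {Y : Ω → ι}

lemma integral_comp_eq_sum [IsFiniteMeasure μ] (hY : Measurable Y) (g : ι → ℝ) :
    ∫ ω, g (Y ω) ∂μ = ∑ i, μ.real (Y ⁻¹' {i}) * g i := by
  rw [← integral_map (f := g) hY.aemeasurable (measurable_of_finite g).aestronglyMeasurable,
    integral_fintype Integrable.of_finite]
  simp [map_measureReal_apply hY]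

lemma sum_measureReal_fiber [IsProbabilityMeasure μ] (hY : Measurable Y) :
    ∑ i, μ.real (Y ⁻¹' {i}) = 1 := by
  simpa using (integral_comp_eq_sum (μ := μ) hY fun _ => 1).symm

lemma shannonEntropy_eq_integral [IsFiniteMeasure μ] (hY : Measurable Y) :
    shannonEntropy μ Y = ∫ ω, -Real.log (μ.real (Y ⁻¹' {Y ω})) ∂μ := by
  rw [integral_comp_eq_sum hY fun i => -Real.log (μ.real (Y ⁻¹' {i}))]
  exact Finset.sum_congr rfl fun i _ => by rw [Real.negMulLog]; ring

/-- Gibbs' inequality. -/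
lemma shannonEntropy_le_integral [IsProbabilityMeasure μ] (hY : Measurable Y) {q : ι → ℝ}
    (hq0 : ∀ i, 0 ≤ q i) (hq1 : ∑ i, q i ≤ 1) {f : Ω → ℝ} (hf : Integrable f μ)
    (hfq : ∀ᵐ ω ∂μ, Real.exp (-f ω) ≤ q (Y ω)) : shannonEntropy μ Y ≤ ∫ ω, f ω ∂μ := by
  have hnull (i : ι) (hi : q i = 0) : μ.real (Y ⁻¹' {i}) = 0 := by
    rw [measureReal_eq_zero_iff, measure_eq_zero_iff_ae_notMem]
    filter_upwards [hfq] with ω hω (hωi : Y ω = i)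
    rw [hωi, hi] at hω
    exact (Real.exp_pos _).not_ge hω
  have hint : ∫ ω, -Real.log (q (Y ω)) ∂μ ≤ ∫ ω, f ω ∂μ := by
    refine integral_mono_ae (Integrable.of_finite.comp_measurable
      (g := fun i => -Real.log (q i)) hY) hf ?_
    filter_upwards [hfq] with ω hω
    rw [neg_le, ← Real.log_exp (-f ω)]
    exact Real.log_le_log (Real.exp_pos _) hω
  rw [integral_comp_eq_sum hY fun i => -Real.log (q i)] at hint
  calc shannonEntropy μ Y
      ≤ ∑ i, (μ.real (Y ⁻¹' {i}) * -Real.log (q i) + q i - μ.real (Y ⁻¹' {i})) :=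
        Finset.sum_le_sum fun i _ =>
          negMulLog_le_neg_mul_log_add_sub measureReal_nonneg (hq0 i) (hnull i)
    _ ≤ ∫ ω, f ω ∂μ := by
        rw [Finset.sum_sub_distrib, Finset.sum_add_distrib, sum_measureReal_fiber hY]
        linarith

lemma shannonEntropy_prodMk_le [IsProbabilityMeasure μ] [MeasurableSpace κ]
    [MeasurableSingletonClass κ] {Z : Ω → κ} (hY : Measurable Y) (hZ : Measurable Z) :
    shannonEntropy μ (fun ω => (Y ω, Z ω)) ≤ shannonEntropy μ Y + shannonEntropy μ Z := by
  have hYint : Integrable (fun ω => -Real.log (μ.real (Y ⁻¹' {Y ω}))) μ :=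
    Integrable.of_finite.comp_measurable (g := fun i => -Real.log (μ.real (Y ⁻¹' {i}))) hY
  have hZint : Integrable (fun ω => -Real.log (μ.real (Z ⁻¹' {Z ω}))) μ :=
    Integrable.of_finite.comp_measurable (g := fun k => -Real.log (μ.real (Z ⁻¹' {k}))) hZ
  rw [shannonEntropy_eq_integral hY, shannonEntropy_eq_integral hZ, ← integral_add hYint hZint]
  refine shannonEntropy_le_integral (hY.prodMk hZ)
    (q := fun p => μ.real (Y ⁻¹' {p.1}) * μ.real (Z ⁻¹' {p.2}))
    (fun _ => mul_nonneg measureReal_nonneg measureReal_nonneg) ?_ (hYint.add hZint) ?_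
  · rw [Fintype.sum_prod_type]
    simp only [← Finset.mul_sum, sum_measureReal_fiber hZ, mul_one, sum_measureReal_fiber hY,
      le_refl]
  · filter_upwards [ae_measureReal_fiber_pos Y, ae_measureReal_fiber_pos Z] with ω hYω hZω
    rw [neg_add, neg_neg, neg_neg, Real.exp_add, Real.exp_log hYω, Real.exp_log hZω]

lemma shannonEntropy_le_log_card [IsProbabilityMeasure μ] (hY : Measurable Y) {s : Finset ι}
    (hs : ∀ᵐ ω ∂μ, Y ω ∈ s) : shannonEntropy μ Y ≤ Real.log s.card := by
  classical
  obtain ⟨ω₀, hω₀⟩ := hs.exists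
  have hpos : (0 : ℝ) < s.card := by exact_mod_cast Finset.card_pos.2 ⟨_, hω₀⟩
  rw [show Real.log s.card = ∫ _, Real.log s.card ∂μ by simp]
  refine shannonEntropy_le_integral hY (q := fun i => if i ∈ s then (s.card : ℝ)⁻¹ else 0)
    (fun i => by positivity) ?_ (integrable_const _) ?_
  · simp [hpos.ne']
  · filter_upwards [hs] with ω hω
    rw [if_pos hω, Real.exp_neg, Real.exp_log hpos]

lemma shannonEntropy_le_mixture {μ₁ μ₂ : Measure Ω} [IsProbabilityMeasure μ₁]
    [IsProbabilityMeasure μ₂] {a b : ℝ} (ha : 0 ≤ a) (hb : 0 ≤ b) (hY : Measurable Y)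
    (h : ∀ s, MeasurableSet s → μ.real s = a * μ₁.real s + b * μ₂.real s) :
    shannonEntropy μ Y ≤ a * shannonEntropy μ₁ Y + b * shannonEntropy μ₂ Y
      + (Real.negMulLog a + Real.negMulLog b) := by
  have hterm (i : ι) : Real.negMulLog (μ.real (Y ⁻¹' {i})) ≤
      a * Real.negMulLog (μ₁.real (Y ⁻¹' {i})) + b * Real.negMulLog (μ₂.real (Y ⁻¹' {i})) +
      (μ₁.real (Y ⁻¹' {i}) * Real.negMulLog a + μ₂.real (Y ⁻¹' {i}) * Real.negMulLog b) := by
    rw [h _ (hY (measurableSet_singleton i))]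
    refine (negMulLog_add_le (mul_nonneg ha measureReal_nonneg)
      (mul_nonneg hb measureReal_nonneg)).trans ?_
    rw [Real.negMulLog_mul, Real.negMulLog_mul]
    linarith
  calc shannonEntropy μ Y ≤ _ := Finset.sum_le_sum fun i _ => hterm i
    _ = _ := by
      simp only [Finset.sum_add_distrib, ← Finset.sum_mul, sum_measureReal_fiber hY,
        ← Finset.mul_sum, one_mul, shannonEntropy]

end Finite

lemma sum_smul_shannonEntropy_le {τ : Type*} {s : Finset τ} {c : τ → ℝ} (hc0 : ∀ t ∈ s, 0 ≤ c t)
    (hc1 : ∑ t ∈ s, c t = 1) {ν : Measure Ω} {Y : τ → Ω → ι} {Z : Ω → ι}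
    (h : ∀ i, μ.real (Z ⁻¹' {i}) = ∑ t ∈ s, c t * ν.real (Y t ⁻¹' {i})) :
    ∑ t ∈ s, c t * shannonEntropy ν (Y t) ≤ shannonEntropy μ Z := by
  simp only [shannonEntropy, Finset.mul_sum, h]
  rw [Finset.sum_comm]
  exact Finset.sum_le_sum fun i _ =>
    Real.concaveOn_negMulLog.le_map_sum hc0 hc1 fun _ _ => measureReal_nonneg

end Entropy

section BlockEntropy

variable {A : Type*} [Fintype A] [MeasurableSpace A] {μ : Measure (ℤ → A)}

lemma blockEntropy_eq (μ : Measure (ℤ → A)) (n : ℕ) :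
    blockEntropy μ n = shannonEntropy μ (window 0 n) := by
  refine Finset.sum_congr rfl fun w _ => ?_
  rw [Measure.real]
  congr 3
  ext x
  simp [cylSet, window, funext_iff]

variable [MeasurableSingletonClass A]

lemma blockEntropy_eq_window (hμ : MeasurePreserving shift μ μ) (a : ℤ) (n : ℕ) :
    blockEntropy μ n = shannonEntropy μ (window a n) := by
  rw [blockEntropy_eq, ← shannonEntropy_comp_measurePreserving (measurePreserving_shiftBy hμ a)
    (measurable_window 0 n)]
  congr 1
  funext x i
  simp [window, add_comm]

lemma shannonEntropy_window_add_le [IsProbabilityMeasure μ] (a : ℤ) (m n : ℕ) :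
    shannonEntropy μ (window a (m + n)) ≤
      shannonEntropy μ (window a m) + shannonEntropy μ (window (a + m) n) := by
  have h : window a (m + n) =
      Fin.appendEquiv m n ∘ fun x : ℤ → A => (window a m x, window (a + m) n x) := by
    funext x i
    cases i using Fin.addCases <;> simp [window, add_assoc]
  rw [h, shannonEntropy_equiv_comp]
  exact shannonEntropy_prodMk_le (measurable_window a m) (measurable_window (a + m) n)

lemma shannonEntropy_window_le [IsProbabilityMeasure μ] (a : ℤ) (n : ℕ) :
    shannonEntropy μ (window a n) ≤ n * Real.log (Fintype.card A) := by
  simpa using shannonEntropy_le_log_card (μ := μ) (measurable_window a n) (s := Finset.univ)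

lemma shannonEntropy_window_mul_le [IsProbabilityMeasure μ] (a : ℤ) (m k : ℕ) :
    shannonEntropy μ (window a (k * m)) ≤
      ∑ i ∈ Finset.range k, shannonEntropy μ (window (a + (i * m : ℕ)) m) := by
  induction k with
  | zero => simpa using shannonEntropy_window_le (μ := μ) a (0 * m)
  | succ k ih =>
    rw [Finset.sum_range_succ, Nat.succ_mul]
    exact (shannonEntropy_window_add_le a (k * m) m).trans (by gcongr)

end BlockEntropy

/-! ### Coding -/

section Coding

open scoped ENNReal

variable {A : Type*}

/-- The total weight of the factorizations of the word `v` into nonempty factors, a factorization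
being weighted by the product of the weights `W u` of its factors. -/
noncomputable def parseWeight (W : List A → ℝ≥0∞) (v : List A) : ℝ≥0∞ :=
  if v = [] then 1 else ∑ k : Fin v.length, parseWeight W (v.take k) * W (v.drop k)
termination_by v.length
decreasing_by simp

@[simp] lemma parseWeight_nil (W : List A → ℝ≥0∞) : parseWeight W [] = 1 := by
  rw [parseWeight, if_pos rfl]

lemma mul_le_parseWeight_append (W : List A → ℝ≥0∞) (v : List A) {u : List A} (hu : u ≠ []) :
    parseWeight W v * W u ≤ parseWeight W (v ++ u) := by
  rw [parseWeight.eq_1 W (v ++ u), if_neg (by simp [hu])]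
  have hv : v.length < (v ++ u).length := by simpa using List.length_pos_of_ne_nil hu
  refine le_trans ?_ (Finset.single_le_sum (fun _ _ => zero_le) (Finset.mem_univ ⟨v.length, hv⟩))
  simp

lemma tsum_parseWeight_le_one {W : List A → ℝ≥0∞} (hW : ∑' u, W u ≤ 1) (n : ℕ) :
    ∑' v : {v : List A // v.length = n}, parseWeight W v ≤ 1 := by
  induction n using Nat.strong_induction_on with | _ n ih =>
  rcases n.eq_zero_or_pos with rfl | hn
  · rw [tsum_eq_single (⟨[], rfl⟩ : {v : List A // v.length = 0}) fun v hv =>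
      absurd (Subtype.ext (List.length_eq_zero_iff.1 v.2)) hv, parseWeight_nil]
  have hsplit (k : Fin n) :
      ∑' v : {v : List A // v.length = n}, parseWeight W (v.1.take k) * W (v.1.drop k) ≤
        ∑' u : {u : List A // u.length = n - k}, W u := by
    let f (v : {v : List A // v.length = n}) :
        {v : List A // v.length = k} × {u : List A // u.length = n - k} :=
      (⟨v.1.take k, by simp [v.2, k.2.le]⟩, ⟨v.1.drop k, by simp [v.2]⟩)
    have hf : f.Injective := fun v w h => by
      simp only [f, Prod.mk.injEq, Subtype.mk.injEq] at h
      rw [Subtype.ext_iff, ← List.take_append_drop k v.1, h.1, h.2, List.take_append_drop]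
    refine (ENNReal.tsum_comp_le_tsum_of_injective hf fun p => parseWeight W p.1 * W p.2).trans ?_
    rw [ENNReal.tsum_prod', ENNReal.tsum_comm]
    simp only [ENNReal.tsum_mul_right]
    exact ENNReal.tsum_le_tsum fun u => mul_le_of_le_one_left zero_le (ih k k.2)
  calc ∑' v : {v : List A // v.length = n}, parseWeight W v
      = ∑ k : Fin n, ∑' v : {v : List A // v.length = n},
          parseWeight W (v.1.take k) * W (v.1.drop k) := by
        rw [← Summable.tsum_finsetSum fun _ _ => ENNReal.summable]
        refine tsum_congr fun v => ?_
        rw [parseWeight, if_neg (List.ne_nil_of_length_pos (by omega))]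
        exact Fintype.sum_equiv (finCongr v.2) _ _ fun _ => rfl
    _ ≤ ∑ k : Fin n, ∑' u : {u : List A // u.length = n - k}, W u :=
        Finset.sum_le_sum fun k _ => hsplit k
    _ = ∑' p : Σ k : Fin n, {u : List A // u.length = n - k}, W p.2 := by
        rw [ENNReal.tsum_sigma', tsum_fintype]
    _ ≤ ∑' u, W u := by
        refine ENNReal.tsum_comp_le_tsum_of_injective
          (f := fun p : Σ k : Fin n, {u : List A // u.length = n - k} => p.2.1) ?_ W
        rintro ⟨k, u, hu⟩ ⟨l, _, hv⟩ rfl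
        have : (k : ℕ) = l := by have := k.2; have := l.2; dsimp only at *; omega
        obtain rfl := Fin.ext this
        rfl
    _ ≤ 1 := hW

lemma parseWeight_le_one {W : List A → ℝ≥0∞} (hW : ∑' u, W u ≤ 1) (v : List A) :
    parseWeight W v ≤ 1 :=
  (ENNReal.le_tsum (⟨v, rfl⟩ : {u : List A // u.length = v.length})).trans
    (tsum_parseWeight_le_one hW v.length)

/-- The weight `e ^ (-h |u|)` of the word `u`. -/
noncomputable def expWeight (h : ℝ) (u : List A) : ℝ≥0∞ :=
  ENNReal.ofReal (Real.exp (-(h * u.length)))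

lemma ofReal_exp_neg_le_parseWeight_append {W : List A → ℝ≥0∞} {u v : List A} {a b c : ℝ}
    (hv : ENNReal.ofReal (Real.exp (-a)) ≤ parseWeight W v)
    (hu : ENNReal.ofReal (Real.exp (-b)) ≤ W u) (hne : u ≠ []) (habc : a + b ≤ c) :
    ENNReal.ofReal (Real.exp (-c)) ≤ parseWeight W (v ++ u) :=
  calc ENNReal.ofReal (Real.exp (-c)) ≤ ENNReal.ofReal (Real.exp (-a) * Real.exp (-b)) := by
        rw [← Real.exp_add]; gcongr; linarith
    _ ≤ parseWeight W v * W u := by rw [ENNReal.ofReal_mul (Real.exp_pos _).le]; gcongr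
    _ ≤ parseWeight W (v ++ u) := mul_le_parseWeight_append W v hne

lemma le_of_forall_nat_mul_le {a b c : ℝ} (h : ∀ n : ℕ, n * a ≤ n * b + c) : a ≤ b := by
  by_contra! hab
  obtain ⟨n, hn⟩ := exists_nat_gt (c / (a - b))
  rw [div_lt_iff₀ (sub_pos.2 hab)] at hn
  linarith [h n]

lemma tendsto_measureReal_of_antitone {Ω : Type*} [MeasurableSpace Ω] {μ : Measure Ω}
    [IsFiniteMeasure μ] {B : ℕ → Set Ω} (hB : ∀ n, MeasurableSet (B n)) (hanti : Antitone B)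
    (hnull : ∀ᵐ ω ∂μ, ∃ n, ω ∉ B n) : Tendsto (fun n => μ.real (B n)) atTop (nhds 0) := by
  have hzero : μ (⋂ n, B n) = 0 :=
    measure_eq_zero_iff_ae_notMem.2 (hnull.mono fun ω hω h => hω.elim fun n hn =>
      hn (mem_iInter.1 h n))
  have h := tendsto_measure_iInter_atTop (fun n => (hB n).nullMeasurableSet) hanti
    ⟨0, measure_ne_top μ _⟩
  rw [hzero] at h
  exact (ENNReal.tendsto_toReal ENNReal.zero_ne_top).comp h

section Finite

variable [Fintype A]

lemma tsum_length_eq (n : ℕ) (f : List A → ℝ≥0∞) :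
    ∑' v : {v : List A // v.length = n}, f v = ∑ w : Fin n → A, f (List.ofFn w) := by
  let e (w : Fin n → A) : {v : List A // v.length = n} := ⟨List.ofFn w, List.length_ofFn⟩
  have he : e.Bijective :=
    ⟨fun v w h => List.ofFn_injective (congrArg Subtype.val h),
      by rintro ⟨v, rfl⟩; exact ⟨v.get, Subtype.ext (List.ofFn_get v)⟩⟩
  rw [← tsum_fintype (L := .unconditional _)]
  exact ((Equiv.ofBijective e he).tsum_eq fun v => f v).symm

/-- Factor weights for coding words by letters and by elements of `C`, a letter costing
`log (2 * card A)` and an element `u` of `C` costing `s * |u|`. -/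
noncomputable def codeWeight (C : Set (List A)) (s : ℝ) (u : List A) : ℝ≥0∞ :=
  {v | v.length = 1}.indicator (fun _ => ENNReal.ofReal (2 * Fintype.card A : ℝ)⁻¹) u +
    C.indicator (expWeight s) u

lemma tsum_codeWeight_le_one {C : Set (List A)} {s : ℝ}
    (hC : ∑' u : C, expWeight s (u : List A) ≤ 1 / 2) :
    ∑' u, codeWeight C s u ≤ 1 := by
  have hletter : ∑' _ : {v : List A | v.length = 1},
      ENNReal.ofReal (2 * Fintype.card A : ℝ)⁻¹ ≤ 1 / 2 := by
    refine (tsum_length_eq 1 fun _ => ENNReal.ofReal (2 * Fintype.card A : ℝ)⁻¹).trans_le ?_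
    rw [Finset.sum_const, Finset.card_univ, Fintype.card_fun,
      Fintype.card_fin, pow_one, nsmul_eq_mul, ← ENNReal.ofReal_natCast,
      ← ENNReal.ofReal_mul (by positivity)]
    refine (ENNReal.ofReal_le_ofReal (q := 1 / 2) ?_).trans_eq ?_
    · rw [mul_inv, mul_left_comm, one_div]
      exact mul_le_of_le_one_right (by norm_num) (mul_inv_le_one)
    · rw [one_div, ENNReal.ofReal_inv_of_pos two_pos]; simp
  simp only [codeWeight]
  rw [ENNReal.tsum_add, ← tsum_subtype, ← tsum_subtype]
  exact (add_le_add hletter hC).trans_eq (ENNReal.add_halves 1)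

lemma expWeight_le_codeWeight {C : Set (List A)} (s : ℝ) {u : List A} (hu : u ∈ C) :
    expWeight s u ≤ codeWeight C s u := by
  rw [codeWeight, indicator_of_mem hu]
  exact le_add_self

variable [Nonempty A]

lemma ofReal_exp_neg_log_le_codeWeight (C : Set (List A)) (s : ℝ) {u : List A}
    (hu : u.length = 1) :
    ENNReal.ofReal (Real.exp (-Real.log (2 * Fintype.card A))) ≤ codeWeight C s u := by
  rw [codeWeight, indicator_of_mem (show u ∈ {v : List A | v.length = 1} from hu), Real.exp_neg,
    Real.exp_log (by positivity)]
  exact le_self_add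

lemma log_two_mul_card_nonneg : 0 ≤ Real.log (2 * Fintype.card A) :=
  Real.log_nonneg (by exact_mod_cast Nat.mul_pos two_pos Fintype.card_pos)

lemma ofReal_exp_le_parseWeight_codeWeight (C : Set (List A)) (s : ℝ) (v : List A) :
    ENNReal.ofReal (Real.exp (-(Real.log (2 * Fintype.card A) * v.length))) ≤
      parseWeight (codeWeight C s) v := by
  induction v using List.reverseRecOn with
  | nil => simp
  | append_singleton v a ih =>
    refine ofReal_exp_neg_le_parseWeight_append ih
      (ofReal_exp_neg_log_le_codeWeight C s (u := [a]) rfl) (by simp) (le_of_eq ?_)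
    push_cast [List.length_append, List.length_singleton]
    ring

end Finite

/-- The points whose past does not end in a word of `C` of length at most `L`. -/
def uncoded (C : Set (List A)) (L : ℕ) : Set (ℤ → A) :=
  {x | ∀ m ≤ L, past x m ∉ C}

/-- Read from the right: at each time outside `uncoded C L` a word of `C` is split off, unless it
overlaps the start of the block, which leaves at most `L` letters. -/
lemma ofReal_exp_le_parseWeight_block [Fintype A] {C : Set (List A)} (hnil : [] ∉ C) {s : ℝ}
    (hs : 0 ≤ s) (L : ℕ) (x : ℤ → A) (n : ℕ) :
    ENNReal.ofReal (Real.exp (-(s * n + Real.log (2 * Fintype.card A) *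
      (L + ∑ i ∈ Finset.range n, (uncoded C L).indicator 1 (shiftBy (i + 1 : ℕ) x))))) ≤
      parseWeight (codeWeight C s) (block x 1 n) := by
  have : Nonempty A := ⟨x 0⟩
  have hc := log_two_mul_card_nonneg (A := A)
  set c := Real.log (2 * Fintype.card A)
  set f : ℕ → ℝ := fun i => (uncoded C L).indicator 1 (shiftBy (i + 1 : ℕ) x)
  have hf (i : ℕ) : 0 ≤ f i := indicator_nonneg (by simp) _
  induction n using Nat.strong_induction_on with | _ n ih =>
  rcases n with _ | n
  · simpa using by positivity
  by_cases hx : shiftBy (n + 1 : ℕ) x ∈ uncoded C L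
  · rw [block_succ]
    refine ofReal_exp_neg_le_parseWeight_append (ih n n.lt_succ_self)
      (ofReal_exp_neg_log_le_codeWeight C s rfl) (by simp) ?_
    have hfn : f n = 1 := indicator_of_mem hx 1
    change _ ≤ s * (n + 1 : ℕ) + c * (L + ∑ i ∈ Finset.range (n + 1), f i)
    rw [Finset.sum_range_succ, hfn]
    push_cast
    linarith
  simp only [uncoded, mem_ofPred_eq, not_forall, not_not] at hx
  obtain ⟨m, hmL, hmC⟩ := hx
  have hm0 : m ≠ 0 := by rintro rfl; exact hnil (by simpa using hmC)
  have hsum (k : ℕ) : 0 ≤ ∑ i ∈ Finset.range k, f i := Finset.sum_nonneg fun i _ => hf i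
  rcases le_or_gt m (n + 1) with hmn | hmn
  · obtain ⟨k, hk⟩ := Nat.exists_eq_add_of_le' hmn
    rw [hk, past_shiftBy_add'] at hmC
    rw [hk, block_add]
    refine ofReal_exp_neg_le_parseWeight_append (ih k (by omega))
      (expWeight_le_codeWeight s hmC) ?_ ?_
    · exact List.ne_nil_of_length_pos (by simpa using Nat.pos_of_ne_zero hm0)
    · have hmono : ∑ i ∈ Finset.range k, f i ≤ ∑ i ∈ Finset.range (k + m), f i :=
        Finset.sum_le_sum_of_subset_of_nonneg (Finset.range_mono (Nat.le_add_right k m))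
          fun i _ _ => hf i
      rw [length_block]
      push_cast
      nlinarith
  · refine le_trans ?_ (ofReal_exp_le_parseWeight_codeWeight C s _)
    have hL : (n + 1 : ℝ) ≤ L := by exact_mod_cast hmn.le.trans hmL
    rw [length_block]
    gcongr ENNReal.ofReal (Real.exp (-?_))
    push_cast
    nlinarith [hsum (n + 1)]

lemma measurableSet_uncoded [Finite A] [MeasurableSpace A] [MeasurableSingletonClass A]
    (C : Set (List A)) (L : ℕ) : MeasurableSet (uncoded C L) := by
  simp only [uncoded, ofPred_forall]
  exact .iInter fun m => .iInter fun _ => measurableSet_past m (· ∉ C)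

lemma sum_toReal_parseWeight_ofFn_le_one [Fintype A] {W : List A → ℝ≥0∞} (hW : ∑' u, W u ≤ 1)
    (n : ℕ) :
    ∑ w : Fin n → A, (parseWeight W (List.ofFn w)).toReal ≤ 1 := by
  rw [← ENNReal.toReal_sum fun w _ => ((parseWeight_le_one hW _).trans_lt ENNReal.one_lt_top).ne,
    ← tsum_length_eq n (parseWeight W)]
  exact ENNReal.toReal_mono ENNReal.one_ne_top (tsum_parseWeight_le_one hW n)

section Entropy

variable [Fintype A] [MeasurableSpace A] [MeasurableSingletonClass A] {μ : Measure (ℤ → A)}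

lemma blockEntropy_le_of_tsum_expWeight_le [IsProbabilityMeasure μ]
    (hμ : MeasurePreserving shift μ μ) {C : Set (List A)} (hnil : [] ∉ C) {s : ℝ} (hs : 0 ≤ s)
    (hC : ∑' u : C, expWeight s (u : List A) ≤ 1 / 2) (L n : ℕ) :
    blockEntropy μ n ≤ s * n + Real.log (2 * Fintype.card A) *
      (L + n * μ.real (uncoded C L)) := by
  have hB := measurableSet_uncoded C L
  set f : ℤ → (ℤ → A) → ℝ := fun t x => (uncoded C L).indicator 1 (shiftBy t x)
  have hf (t : ℤ) : Integrable (f t) μ :=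
    (measurePreserving_shiftBy hμ t).integrable_comp_of_integrable
      ((integrable_const 1).indicator hB)
  have hmean (t : ℤ) : ∫ x, f t x ∂μ = μ.real (uncoded C L) := by
    rw [measureReal_def, ← measure_shiftBy_preimage hμ t hB, ← measureReal_def,
      ← integral_indicator_one (measurable_shiftBy t hB)]
    rfl
  have hvisits : Integrable (fun x => ∑ i ∈ Finset.range n, f (i + 1 : ℕ) x) μ :=
    integrable_finsetSum _ fun i _ => hf _
  have hcost : Integrable (fun x => Real.log (2 * Fintype.card A) *
      (L + ∑ i ∈ Finset.range n, f (i + 1 : ℕ) x)) μ :=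
    ((integrable_const _).add hvisits).const_mul _
  have hW := tsum_codeWeight_le_one hC
  calc blockEntropy μ n = shannonEntropy μ (window 1 n) := blockEntropy_eq_window hμ 1 n
    _ ≤ ∫ x, (s * n + Real.log (2 * Fintype.card A) *
          (L + ∑ i ∈ Finset.range n, f (i + 1 : ℕ) x)) ∂μ :=
        shannonEntropy_le_integral (measurable_window 1 n) (fun _ => ENNReal.toReal_nonneg)
          (sum_toReal_parseWeight_ofFn_le_one hW n) ((integrable_const (s * n)).add hcost)
          (.of_forall fun x => (ENNReal.ofReal_le_iff_le_toReal
            ((parseWeight_le_one hW _).trans_lt ENNReal.one_lt_top).ne).1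
            (ofReal_exp_le_parseWeight_block hnil hs L x n))
    _ = _ := by
        rw [integral_add (integrable_const _) hcost, integral_const_mul (Real.log _),
          integral_add (integrable_const _) hvisits, integral_finsetSum _ fun i _ => hf _]
        simp [hmean]

theorem le_of_ae_exists_past_mem [IsProbabilityMeasure μ] (hμ : MeasurePreserving shift μ μ)
    {C : Set (List A)} (hnil : [] ∉ C) {s h : ℝ} (hs : 0 ≤ s)
    (hC : ∑' u : C, expWeight s (u : List A) ≤ 1 / 2) (hpast : ∀ᵐ x ∂μ, ∃ m, past x m ∈ C)
    (hlow : ∀ n : ℕ, n * h ≤ blockEntropy μ n) : h ≤ s := by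
  set c := Real.log (2 * Fintype.card A)
  have hbound (L : ℕ) : h ≤ s + c * μ.real (uncoded C L) :=
    le_of_forall_nat_mul_le (c := c * L) fun n => by
      linarith [hlow n, blockEntropy_le_of_tsum_expWeight_le hμ hnil hs hC L n]
  have hlim : Tendsto (fun L => μ.real (uncoded C L)) atTop (nhds 0) :=
    tendsto_measureReal_of_antitone (measurableSet_uncoded C)
      (fun L M hLM x hx m hm => hx m (hm.trans hLM))
      (hpast.mono fun x ⟨m, hm⟩ => ⟨m, fun hx => hx m le_rfl hm⟩)
  simpa using ge_of_tendsto' ((hlim.const_mul c).const_add s) hbound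

end Entropy

end Coding

/-! ### Growth of sets of words -/

section Growth

variable {A : Type*} {X : Set (ℤ → A)}

lemma setOf_length_eq_Lang (X : Set (ℤ → A)) (n : ℕ) :
    {u ∈ {u | u ∈ Lang X u.length} | u.length = n} = Lang X n := by
  ext u
  constructor
  · rintro ⟨hu, rfl⟩; exact hu
  · rintro hu; obtain rfl := hu.1; exact ⟨hu, rfl⟩

lemma setOf_length_eq_LC (X : Set (ℤ → A)) (n : ℕ) :
    {u ∈ {u | IsLeftConstraint X u} | u.length = n} = LC X n := by
  ext u; exact and_comm

variable {S : ℕ → Set (List A)} {r s : ℝ}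

lemma hTop_empty : hTop (∅ : Set (ℤ → A)) = 0 := by
  simp [hTop, Lang]

lemma frequently_le_log_natCard_Lang (hr : r < hTop X) :
    ∃ᶠ n : ℕ in atTop, r * n ≤ Real.log (Nat.card (Lang X n)) := by
  have hcobdd : IsCoboundedUnder (· ≤ ·) atTop fun n : ℕ => Real.log (Nat.card (Lang X n)) / n :=
    (isBoundedUnder_of ⟨0, fun n => div_nonneg (Real.log_natCast_nonneg _) n.cast_nonneg⟩ :
      IsBoundedUnder (· ≥ ·) atTop _).isCoboundedUnder_le
  refine ((frequently_lt_of_lt_limsup hcobdd hr).and_eventually (eventually_gt_atTop 0)).mono ?_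
  rintro n ⟨hn, hn0⟩
  rw [lt_div_iff₀ (by exact_mod_cast hn0)] at hn
  exact hn.le

lemma natCard_le_pow_of_length [Fintype A] {T : Set (List A)} {n : ℕ} (hT : ∀ w ∈ T, w.length = n) :
    Nat.card T ≤ Fintype.card A ^ n := by
  refine (Nat.card_mono (List.finite_length_eq A n) hT).trans_eq ?_
  rw [← card_vector n, ← Nat.card_eq_fintype_card]
  rfl

lemma log_natCard_div_le [Fintype A] {T : Set (List A)} {n : ℕ} (hT : ∀ w ∈ T, w.length = n) :
    Real.log (Nat.card T) / n ≤ Real.log (Fintype.card A) := by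
  refine div_le_of_le_mul₀ n.cast_nonneg (Real.log_natCast_nonneg _) ?_
  rcases (Nat.card T).eq_zero_or_pos with h0 | h0
  · rw [h0, Nat.cast_zero, Real.log_zero]
    exact mul_nonneg (Real.log_natCast_nonneg _) n.cast_nonneg
  · rw [mul_comm, ← Real.log_pow]
    exact Real.log_le_log (mod_cast h0) (mod_cast natCard_le_pow_of_length hT)

lemma hC_eq (X : Set (ℤ → A)) :
    hC X = limsup (fun n : ℕ => Real.log (Nat.card (LC X n)) / n) atTop := by
  simp only [hC, max_eq_right (Real.log_natCast_nonneg _)]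

variable [Finite A]

lemma limsup_log_natCard_div_nonneg (hS : ∀ n, ∀ w ∈ S n, w.length = n) :
    0 ≤ limsup (fun n : ℕ => Real.log (Nat.card (S n)) / n) atTop := by
  have := Fintype.ofFinite A
  have hbdd : IsBoundedUnder (· ≤ ·) atTop fun n : ℕ => Real.log (Nat.card (S n)) / n :=
    isBoundedUnder_of ⟨_, fun n => log_natCard_div_le (hS n)⟩
  exact le_limsup_of_frequently_le (Frequently.of_forall fun n =>
    div_nonneg (Real.log_natCast_nonneg _) n.cast_nonneg) hbdd

lemma hTop_nonneg (X : Set (ℤ → A)) : 0 ≤ hTop X :=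
  limsup_log_natCard_div_nonneg fun _ _ hw => hw.1

lemma hC_nonneg (X : Set (ℤ → A)) : 0 ≤ hC X :=
  hC_eq X ▸ limsup_log_natCard_div_nonneg fun _ _ hw => hw.1

lemma eventually_natCard_le_exp (hS : ∀ n, ∀ w ∈ S n, w.length = n)
    (hr : limsup (fun n : ℕ => Real.log (Nat.card (S n)) / n) atTop < r) :
    ∀ᶠ n : ℕ in atTop, (Nat.card (S n) : ℝ) ≤ Real.exp (r * n) := by
  have := Fintype.ofFinite A
  have hbdd : IsBoundedUnder (· ≤ ·) atTop fun n : ℕ => Real.log (Nat.card (S n)) / n :=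
    isBoundedUnder_of ⟨_, fun n => log_natCard_div_le (hS n)⟩
  filter_upwards [eventually_lt_of_limsup_lt hr hbdd, eventually_gt_atTop 0] with n hn hn0
  rw [div_lt_iff₀ (by exact_mod_cast hn0)] at hn
  exact (Real.le_exp_log _).trans (Real.exp_le_exp.2 hn.le)

lemma eventually_natCard_Lang_le_exp (hr : hTop X < r) :
    ∀ᶠ n : ℕ in atTop, (Nat.card (Lang X n) : ℝ) ≤ Real.exp (r * n) :=
  eventually_natCard_le_exp (fun _ _ h => h.1) hr

lemma eventually_natCard_LC_le_exp (hr : hC X < r) :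
    ∀ᶠ n : ℕ in atTop, (Nat.card (LC X n) : ℝ) ≤ Real.exp (r * n) :=
  eventually_natCard_le_exp (fun _ _ h => h.1) (hC_eq X ▸ hr)

lemma tsum_expWeight_ne_top {T : Set (List A)} (hrs : r < s)
    (hT : ∀ᶠ n : ℕ in atTop, (Nat.card {u ∈ T | u.length = n} : ℝ) ≤ Real.exp (r * n)) :
    ∑' u : T, expWeight s (u : List A) ≠ ⊤ := by
  have hlevel (n : ℕ) : ∑' u : {u : T // u.1.length = n}, expWeight s (u : List A) =
      ENNReal.ofReal (Nat.card {u ∈ T | u.length = n} * Real.exp (-(s * n))) := by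
    have e : {u : T // u.1.length = n} ≃ {u | u ∈ T ∧ u.length = n} :=
      Equiv.subtypeSubtypeEquivSubtypeInter (· ∈ T) fun u => u.length = n
    have : Finite {u : T // u.1.length = n} := by
      have := ((List.finite_length_eq A n).subset
        fun u (hu : u ∈ {u | u ∈ T ∧ u.length = n}) => hu.2).to_subtype
      exact .of_equiv _ e.symm
    have hconst (u : {u : T // u.1.length = n}) :
        expWeight s (u : List A) = ENNReal.ofReal (Real.exp (-(s * n))) := by
      rw [expWeight, u.2]
    simp only [hconst]
    rw [ENNReal.tsum_const, ENNReal.ofReal_mul (Nat.cast_nonneg _), ENNReal.ofReal_natCast,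
      ENat.card_eq_coe_natCard, Nat.card_congr e]
    rfl
  rw [← (Equiv.sigmaFiberEquiv fun u : T => u.1.length).tsum_eq, ENNReal.tsum_sigma']
  simp only [Equiv.sigmaFiberEquiv_apply, hlevel]
  refine Summable.tsum_ofReal_ne_top ?_
  have hgeom : Summable fun n : ℕ => Real.exp (r - s) ^ n :=
    summable_geometric_of_lt_one (Real.exp_pos _).le (Real.exp_lt_one_iff.2 (sub_neg.2 hrs))
  refine Summable.of_norm_bounded_eventually_nat hgeom (hT.mono fun n hn => ?_)
  rw [Real.norm_of_nonneg (by positivity), ← Real.exp_nat_mul]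
  calc _ ≤ Real.exp (r * n) * Real.exp (-(s * n)) := by gcongr
    _ = Real.exp (n * (r - s)) := by rw [← Real.exp_add]; ring_nf

lemma exists_tsum_expWeight_le_of_hC_lt (hs : hC X < s) :
    ∃ N, ∑' u : {u : List A | N ≤ u.length ∧ IsLeftConstraint X u}, expWeight s (u : List A)
      ≤ 1 / 2 := by
  obtain ⟨r, hr, hrs⟩ := exists_between hs
  set T := {u : List A | IsLeftConstraint X u}
  have hfin : ∑' u : T, expWeight s (u : List A) ≠ ⊤ :=
    tsum_expWeight_ne_top hrs (by
      simpa only [T, setOf_length_eq_LC] using eventually_natCard_LC_le_exp hr)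
  obtain ⟨F, hF⟩ := ((ENNReal.tendsto_tsum_compl_atTop_zero hfin).eventually
    (gt_mem_nhds (show (0 : ENNReal) < 1 / 2 by simp))).exists
  set N := F.sup (fun u => u.1.length) + 1
  let f (u : {u : List A | N ≤ u.length ∧ IsLeftConstraint X u}) : {u : T // u ∉ F} :=
    ⟨⟨u.1, u.2.2⟩, fun hu =>
      (Nat.lt_of_succ_le u.2.1).not_ge (Finset.le_sup (f := fun u => u.1.length) hu)⟩
  have hf : f.Injective := fun u v h =>
    Subtype.ext (congrArg (fun w => (w.1.1 : List A)) h)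
  exact ⟨N, (ENNReal.tsum_comp_le_tsum_of_injective hf fun u => expWeight s (u.1 : List A)).trans
    hF.le⟩

end Growth

/-! ### Eventual follower sets -/

section StateSet

variable {A : Type*} {X : Set (ℤ → A)} {S T : Set (ℕ → A)} {x : ℤ → A}

/-- The points in state `S`: those whose long pasts all have follower set `S`. -/
def stateSet (X : Set (ℤ → A)) (S : Set (ℕ → A)) : Set (ℤ → A) :=
  {x | ∀ᶠ n in atTop, fol X (past x n) = S}

lemma eq_of_mem_stateSet (hS : x ∈ stateSet X S) (hT : x ∈ stateSet X T) : S = T :=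
  (hS.and hT).exists.elim fun _ h => h.1.symm.trans h.2

lemma nonempty_of_mem_stateSet (hX : shift '' X = X) (hx : x ∈ X) (hS : x ∈ stateSet X S) :
    S.Nonempty :=
  hS.exists.elim fun n hn => hn ▸ fol_past_nonempty hX hx n

lemma fol_past_shiftBy_add (X : Set (ℤ → A)) (x : ℤ → A) (n m : ℕ) :
    fol X (past (shiftBy m x) (n + m)) = leftQuotient (fol X (past x n)) (block x 1 m) := by
  rw [past_shiftBy_add, fol_append]

lemma shiftBy_mem_stateSet (hS : x ∈ stateSet X S) (m : ℕ) :
    shiftBy m x ∈ stateSet X (leftQuotient S (block x 1 m)) := by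
  rw [stateSet, mem_ofPred_eq, ← map_add_atTop_eq_nat m,
    eventually_map]
  filter_upwards [hS] with n hn
  rw [fol_past_shiftBy_add, hn]

lemma shiftBy_mem_stateSet_iff (hS : x ∈ stateSet X S) (m : ℕ) :
    shiftBy m x ∈ stateSet X T ↔ leftQuotient S (block x 1 m) = T :=
  ⟨eq_of_mem_stateSet (shiftBy_mem_stateSet hS m), fun h => h ▸ shiftBy_mem_stateSet hS m⟩

lemma exists_isLeftConstraint_past (hX : shift '' X = X) (hx : x ∈ X) {N : ℕ}
    (hN : x ∉ stateSet X (fol X (past x N))) : ∃ n, N ≤ n ∧ IsLeftConstraint X (past x n) := by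
  by_contra! h
  refine hN (eventually_atTop.2 ⟨N, fun n hn => Nat.le_induction rfl (fun k hk ih => ?_) n hn⟩)
  rw [← ih, ← tail_past x k]
  by_contra hne
  refine h (k + 1) (by omega) ⟨List.ne_nil_of_length_pos (by simp),
    (fol_past_nonempty hX hx _).ne_empty, (fol_subset_fol_tail hX _).ssubset_of_ne hne⟩

variable [Finite A] [MeasurableSpace A] [MeasurableSingletonClass A]

lemma measurableSet_stateSet (X : Set (ℤ → A)) (S : Set (ℕ → A)) :
    MeasurableSet (stateSet X S) := by
  simp only [stateSet, eventually_atTop, ofPred_exists, ofPred_forall]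
  exact .iUnion fun _ => .iInter fun n => .iInter fun _ =>
    measurableSet_past n fun w => fol X w = S

end StateSet

theorem exists_measure_stateSet_ne_zero {A : Type*} [Fintype A] [MeasurableSpace A]
    [MeasurableSingletonClass A] {X : Set (ℤ → A)} (hX : shift '' X = X) {μ : Measure (ℤ → A)}
    [IsProbabilityMeasure μ] (hμ : MeasurePreserving shift μ μ) (hμX : μ Xᶜ = 0) {s h : ℝ}
    (hs : 0 ≤ s) (hsh : s < h) {N : ℕ}
    (hN : ∑' u : {u : List A | N ≤ u.length ∧ IsLeftConstraint X u}, expWeight s (u : List A)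
      ≤ 1 / 2) (hlow : ∀ n : ℕ, n * h ≤ blockEntropy μ n) :
    ∃ w : List A, w.length = N ∧ μ (stateSet X (fol X w)) ≠ 0 := by
  by_contra! hnull
  refine hsh.not_ge (le_of_ae_exists_past_mem hμ (fun hnil => hnil.2.1 rfl) hs hN ?_ hlow)
  have hstate : ∀ᵐ x ∂μ, ∀ w : List A, w.length = N → x ∉ stateSet X (fol X w) :=
    ae_all_iff.2 fun w => ae_all_iff.2 fun hw => measure_eq_zero_iff_ae_notMem.1 (hnull w hw)
  filter_upwards [hstate, compl_mem_ae_iff.2 hμX] with x hx hxX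
  obtain ⟨n, hn, hconstraint⟩ :=
    exists_isLeftConstraint_past hX (not_not.1 hxX) (hx (past x N) (length_past x N))
  exact ⟨n, by rwa [length_past], hconstraint⟩

/-! ### First passage weights -/

section Passage

open scoped ENNReal

variable {A : Type*} {S T : Set (ℕ → A)} {s h : ℝ} {u v w : List A}

@[simp] lemma expWeight_nil (h : ℝ) : expWeight h ([] : List A) = 1 := by
  simp [expWeight]

lemma expWeight_append (h : ℝ) (u v : List A) :
    expWeight h (u ++ v) = expWeight h u * expWeight h v := by
  rw [expWeight, expWeight, expWeight, ← ENNReal.ofReal_mul (Real.exp_pos _).le, ← Real.exp_add]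
  congr 2
  push_cast [List.length_append]
  ring

lemma expWeight_ne_zero (h : ℝ) (u : List A) : expWeight h u ≠ 0 :=
  (ENNReal.ofReal_pos.2 (Real.exp_pos _)).ne'

lemma tsum_expWeight_le_of_forall_gt {C : Set (List A)} {c : ℝ≥0∞}
    (hc : ∀ s > h, ∑' u : C, expWeight s (u : List A) ≤ c) :
    ∑' u : C, expWeight h (u : List A) ≤ c := by
  rw [ENNReal.tsum_eq_iSup_sum]
  refine iSup_le fun F => ?_
  have hcont : Continuous fun s : ℝ => ∑ u ∈ F, expWeight s (u : List A) :=
    continuous_finsetSum _ fun u _ => ENNReal.continuous_ofReal.comp (by fun_prop)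
  refine le_of_tendsto (hcont.continuousAt.tendsto.mono_left (nhdsWithin_le_nhds (s := Ioi h))) ?_
  filter_upwards [self_mem_nhdsWithin] with s hs
  exact (ENNReal.sum_le_tsum F).trans (hc s hs)

/-- The words along which the state `T` reaches the state `S`, and does so for the first time. -/
def firstPassages (S T : Set (ℕ → A)) : Set (List A) :=
  {w | leftQuotient T w = S ∧ ∀ k < w.length, leftQuotient T (w.take k) ≠ S}

/-- The nonempty words along which the state `T` reaches the state `S` for the first time after
time zero. -/
def firstReturns (S T : Set (ℕ → A)) : Set (List A) :=
  {w | w ≠ [] ∧ leftQuotient T w = S ∧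
    ∀ k, 0 < k → k < w.length → leftQuotient T (w.take k) ≠ S}

/-- The generating function, at `e ^ (-h)`, of the first passages from `T` to `S`. -/
noncomputable def passageWeight (h : ℝ) (S T : Set (ℕ → A)) : ℝ≥0∞ :=
  ∑' w : firstPassages S T, expWeight h (w : List A)

lemma passageWeight_self (h : ℝ) (S : Set (ℕ → A)) : passageWeight h S S = 1 := by
  have hnil : firstPassages S S = {[]} := by
    ext w
    refine ⟨fun hw => ?_, by rintro rfl; simp [firstPassages]⟩
    by_contra hne
    exact hw.2 0 (List.length_pos_of_ne_nil hne) rfl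
  rw [passageWeight, hnil, tsum_singleton ([] : List A) (expWeight h), expWeight_nil]

lemma firstReturns_subset_firstPassages (hne : T ≠ S) : firstReturns S T ⊆ firstPassages S T := by
  rintro w ⟨-, hw, hfirst⟩
  refine ⟨hw, fun k hk => ?_⟩
  rcases k.eq_zero_or_pos with rfl | hk0
  · exact hne
  · exact hfirst k hk0 hk

lemma cons_mem_firstReturns {a : A} (hw : w ∈ firstPassages S (leftQuotient T [a])) :
    a :: w ∈ firstReturns S T := by
  refine ⟨List.cons_ne_nil a w, hw.1, fun k hk0 hk => ?_⟩
  obtain ⟨k, rfl⟩ := Nat.exists_eq_succ_of_ne_zero hk0.ne'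
  exact hw.2 k (Nat.lt_of_succ_lt_succ hk)

lemma eq_of_append_eq_append_of_mem_firstReturns {u' v' : List A} (hu : u ∈ firstReturns S T)
    (hu' : u' ∈ firstReturns S T) (heq : u ++ v = u' ++ v') : u = u' := by
  wlog hle : u.length ≤ u'.length generalizing u u' v v'
  · exact (this hu' hu heq.symm (le_of_not_ge hle)).symm
  have htake : u = u'.take u.length := by
    rw [← List.take_append_of_le_length (l₂ := v') hle, ← heq, List.take_left]
  refine hle.eq_or_lt.elim (fun hlen => ?_) fun hlt => ?_
  · rw [htake, hlen, List.take_length]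
  · exact (hu'.2.2 _ (List.length_pos_of_ne_nil hu.1) hlt (htake ▸ hu.2.1)).elim

/-- Splitting a nonempty loop at its first return gives `1 + F * G ≤ G` for the generating
functions `F` of first returns and `G` of loops. -/
lemma tsum_firstReturns_le_one
    (hloops : ∑' w : {w : List A | leftQuotient S w = S}, expWeight s (w : List A) ≠ ⊤) :
    ∑' w : firstReturns S S, expWeight s (w : List A) ≤ 1 := by
  set loops : Set (List A) := {w | leftQuotient S w = S}
  let f : Unit ⊕ firstReturns S S × loops → loops
    | .inl _ => ⟨[], rfl⟩
    | .inr (u, v) => ⟨u ++ v, by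
        rw [mem_ofPred_eq, leftQuotient_append, u.2.2.1]; exact v.2⟩
  have hf : f.Injective := by
    rintro (_ | ⟨u, v⟩) (_ | ⟨u', v'⟩) heq
    · rfl
    · exact (u'.2.1 (List.append_eq_nil_iff.1 (congrArg Subtype.val heq).symm).1).elim
    · exact (u.2.1 (List.append_eq_nil_iff.1 (congrArg Subtype.val heq)).1).elim
    · have heq : (u ++ v : List A) = u' ++ v' := congrArg Subtype.val heq
      have huu := eq_of_append_eq_append_of_mem_firstReturns u.2 u'.2 heq
      rw [huu] at heq
      rw [Subtype.ext huu, Subtype.ext (List.append_cancel_left heq)]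
  have hrenewal : 1 + (∑' u : firstReturns S S, expWeight s (u : List A)) *
      ∑' v : loops, expWeight s (v : List A) ≤ ∑' v : loops, expWeight s (v : List A) := by
    refine le_of_eq_of_le ?_
      (ENNReal.tsum_comp_le_tsum_of_injective hf fun v => expWeight s (v : List A))
    rw [ENNReal.summable.tsum_sum ENNReal.summable, ENNReal.tsum_prod']
    simp [f, expWeight_append, ENNReal.tsum_mul_left, ENNReal.tsum_mul_right]
  by_contra! hlt
  have hlt' := ENNReal.lt_add_right hloops one_ne_zero
  rw [add_comm] at hlt'
  refine (hlt'.trans_le (le_trans ?_ hrenewal)).false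
  gcongr
  exact le_mul_of_one_le_left zero_le hlt.le

lemma tsum_loops_ne_top [Finite A] {X : Set (ℤ → A)} (hX : shift '' X = X) (hs : hTop X < s)
    {w : List A} (hw : (fol X w).Nonempty) :
    ∑' u : {u : List A | leftQuotient (fol X w) u = fol X w}, expWeight s (u : List A) ≠ ⊤ := by
  obtain ⟨r, hr, hrs⟩ := exists_between hs
  have hsub : {u : List A | leftQuotient (fol X w) u = fol X w} ⊆ {u | u ∈ Lang X u.length} :=
    fun u hu => mem_Lang_of_fol_append_nonempty hX
      (w := w) (by rw [fol_append, show leftQuotient _ u = _ from hu]; exact hw)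
  refine ((ENNReal.tsum_mono_subtype _ hsub).trans_lt (lt_top_iff_ne_top.2 ?_)).ne
  exact tsum_expWeight_ne_top hrs (by
    simpa only [setOf_length_eq_Lang] using eventually_natCard_Lang_le_exp hr)

lemma sum_expWeight_mul_passageWeight_le_tsum_firstReturns [Fintype A] (h : ℝ) (S T : Set (ℕ → A)) :
    ∑ a : A, expWeight h [a] * passageWeight h S (leftQuotient T [a]) ≤
      ∑' w : firstReturns S T, expWeight h (w : List A) := by
  let f (p : Σ a : A, firstPassages S (leftQuotient T [a])) : firstReturns S T :=
    ⟨p.1 :: p.2.1, cons_mem_firstReturns p.2.2⟩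
  have hf : f.Injective := by
    rintro ⟨a, u, hu⟩ ⟨b, v, hv⟩ heq
    obtain ⟨rfl, rfl⟩ := List.cons.inj (congrArg Subtype.val heq)
    rfl
  refine le_of_eq_of_le ?_
    (ENNReal.tsum_comp_le_tsum_of_injective hf fun w => expWeight h (w : List A))
  rw [ENNReal.tsum_sigma', tsum_fintype]
  refine Finset.sum_congr rfl fun a _ => ?_
  rw [passageWeight, ← ENNReal.tsum_mul_left]
  exact tsum_congr fun w => (expWeight_append h [a] w).symm

variable {X : Set (ℤ → A)}

lemma sum_expWeight_mul_passageWeight_le [Fintype A] (hX : shift '' X = X)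
    (hw : (fol X w).Nonempty) (T : Set (ℕ → A)) :
    ∑ a : A, expWeight (hTop X) [a] * passageWeight (hTop X) (fol X w) (leftQuotient T [a]) ≤
      passageWeight (hTop X) (fol X w) T := by
  refine (sum_expWeight_mul_passageWeight_le_tsum_firstReturns _ _ _).trans ?_
  obtain rfl | hne := eq_or_ne T (fol X w)
  · rw [passageWeight_self]
    exact tsum_expWeight_le_of_forall_gt fun s hs =>
      tsum_firstReturns_le_one (tsum_loops_ne_top hX hs hw)
  · exact ENNReal.tsum_mono_subtype _ (firstReturns_subset_firstPassages hne)

lemma expWeight_mul_passageWeight_le [Finite A] (hX : shift '' X = X)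
    (hw : (fol X w).Nonempty) (T : Set (ℕ → A)) (u : List A) :
    expWeight (hTop X) u * passageWeight (hTop X) (fol X w) (leftQuotient T u) ≤
      passageWeight (hTop X) (fol X w) T := by
  have := Fintype.ofFinite A
  induction u generalizing T with
  | nil => simp
  | cons a u ih =>
    rw [← List.singleton_append, expWeight_append, mul_assoc, leftQuotient_append]
    calc
      _ ≤ expWeight (hTop X) [a] * passageWeight (hTop X) (fol X w) (leftQuotient T [a]) := by
        gcongr
        exact ih _
      _ ≤ ∑ a : A, expWeight (hTop X) [a] *
          passageWeight (hTop X) (fol X w) (leftQuotient T [a]) :=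
        Finset.single_le_sum (f := fun a => expWeight (hTop X) [a] *
          passageWeight (hTop X) (fol X w) (leftQuotient T [a])) (fun _ _ => zero_le)
          (Finset.mem_univ a)
      _ ≤ _ := sum_expWeight_mul_passageWeight_le hX hw T

lemma passageWeight_ne_top [Finite A] (hX : shift '' X = X)
    (hw : (fol X w).Nonempty) (hT : leftQuotient (fol X w) u = T) :
    passageWeight (hTop X) (fol X w) T ≠ ⊤ := by
  intro htop
  have := expWeight_mul_passageWeight_le hX hw (fol X w) u
  rw [hT, htop, passageWeight_self, ENNReal.mul_top (expWeight_ne_zero _ _)] at this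
  exact absurd this (by simp)

lemma passageWeight_ne_zero [Finite A] (hX : shift '' X = X)
    (hw : (fol X w).Nonempty) (hT : leftQuotient T u = fol X w) :
    passageWeight (hTop X) (fol X w) T ≠ 0 := by
  intro hzero
  have := expWeight_mul_passageWeight_le hX hw T u
  rw [hT, hzero, passageWeight_self, mul_one] at this
  exact expWeight_ne_zero _ _ (le_antisymm this zero_le)

end Passage

/-! ### Conditional entropy -/

section CondEntropy

open scoped ProbabilityTheory Topology

lemma eq_of_neg_mul_log_add_sub_le {p q : ℝ} (hp : 0 ≤ p) (hq : 0 ≤ q) (hpq : q = 0 → p = 0)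
    (h : p * -Real.log q + q - p ≤ Real.negMulLog p) : p = q := by
  rcases hq.eq_or_lt with rfl | hq
  · exact hpq rfl
  by_contra hne
  have hlt := Real.negMulLog_lt_one_sub_self (div_nonneg hp hq.le)
    fun h1 => hne ((div_eq_one_iff_eq hq.ne').1 h1)
  have hmul := Real.negMulLog_mul q (p / q)
  rw [mul_div_cancel₀ _ hq.ne', show Real.negMulLog q = q * -Real.log q by simp [Real.negMulLog],
    ← mul_assoc, div_mul_cancel₀ _ hq.ne'] at hmul
  have := mul_lt_mul_of_pos_left hlt hq
  rw [mul_sub, mul_one, mul_div_cancel₀ _ hq.ne'] at this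
  linarith

variable {Ω ι κ : Type*} {m mΩ : MeasurableSpace Ω} {μ : Measure Ω} [IsProbabilityMeasure μ]

lemma ae_condExp_indicator_mem_Icc {s : Set Ω} (hs : MeasurableSet s) :
    ∀ᵐ ω ∂μ, (μ⟦s|m⟧) ω ∈ Icc (0 : ℝ) 1 := by
  have hint : Integrable (s.indicator fun _ => (1 : ℝ)) μ := (integrable_const 1).indicator hs
  by_cases hm : m ≤ mΩ
  · have h0 := condExp_mono (μ := μ) (m := m) (integrable_zero Ω ℝ μ) hint
      (.of_forall (indicator_nonneg fun _ _ => zero_le_one))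
    have h1 := condExp_mono (μ := μ) (m := m) hint (integrable_const 1)
      (.of_forall (indicator_le_self' fun _ _ => zero_le_one))
    rw [condExp_zero] at h0
    rw [condExp_const hm] at h1
    filter_upwards [h0, h1] with ω h0 h1 using ⟨h0, h1⟩
  · rw [condExp_of_not_le hm]
    exact .of_forall fun _ => ⟨le_rfl, zero_le_one⟩

lemma abs_negMulLog_le_one {p : ℝ} (hp : p ∈ Icc (0 : ℝ) 1) : |Real.negMulLog p| ≤ 1 := by
  rw [abs_of_nonneg (Real.negMulLog_nonneg hp.1 hp.2)]
  linarith [Real.negMulLog_le_one_sub_self hp.1, hp.1]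

/-- The Shannon entropy of the finite-valued random variable `Z` given the σ-algebra `m`. -/
noncomputable def condShannonEntropy {Ω κ : Type*} [Fintype κ] (m : MeasurableSpace Ω)
    {_mΩ : MeasurableSpace Ω} (μ : Measure Ω) (Z : Ω → κ) : ℝ :=
  ∫ ω, ∑ z, Real.negMulLog ((μ⟦Z ⁻¹' {z}|m⟧) ω) ∂μ

variable [MeasurableSpace ι] [MeasurableSingletonClass ι] {Y : Ω → ι}
  [MeasurableSpace κ] [MeasurableSingletonClass κ] {Z : Ω → κ}

lemma integrable_negMulLog_condExp (hZ : Measurable Z) (z : κ) :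
    Integrable (fun ω => Real.negMulLog ((μ⟦Z ⁻¹' {z}|m⟧) ω)) μ :=
  .of_bound (Real.continuous_negMulLog.comp_aestronglyMeasurable
    integrable_condExp.aestronglyMeasurable) 1
    ((ae_condExp_indicator_mem_Icc (hZ (measurableSet_singleton z))).mono
      fun _ hω => abs_negMulLog_le_one hω)

lemma condExp_comap_eq_div [Finite ι] [Finite κ] (hY : Measurable Y) (hZ : Measurable Z) (z : κ) :
    μ⟦Z ⁻¹' {z}|MeasurableSpace.comap Y inferInstance⟧ =ᵐ[μ]
      fun ω => μ.real ((fun ω => (Y ω, Z ω)) ⁻¹' {(Y ω, z)}) / μ.real (Y ⁻¹' {Y ω}) := by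
  have : Nonempty κ := ⟨z⟩
  refine (ProbabilityTheory.condDistrib_ae_eq_condExp hY hZ (measurableSet_singleton z)).symm.trans
    ?_
  filter_upwards [ae_measureReal_fiber_pos Y] with ω hω
  have hmap : μ.map Y {Y ω} = μ (Y ⁻¹' {Y ω}) := Measure.map_apply hY (measurableSet_singleton _)
  rw [measureReal_def, ProbabilityTheory.condDistrib_apply_of_ne_zero hZ _ (fun h => hω.ne' ?_),
    hmap, singleton_prod_singleton, Measure.map_apply (hY.prodMk hZ) (measurableSet_singleton _),
    ENNReal.toReal_mul, ENNReal.toReal_inv, div_eq_inv_mul, measureReal_def, measureReal_def]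
  rw [measureReal_def, ← hmap, h, ENNReal.toReal_zero]

variable [Fintype ι] [Fintype κ]

theorem tendsto_condShannonEntropy (ℱ : Filtration ℕ mΩ) (hZ : Measurable Z) :
    Tendsto (fun n => condShannonEntropy (ℱ n) μ Z) atTop
      (𝓝 (condShannonEntropy (⨆ n, ℱ n) μ Z)) := by
  simp only [condShannonEntropy, integral_finsetSum _ fun z _ =>
    integrable_negMulLog_condExp hZ z]
  refine tendsto_finsetSum _ fun z _ => tendsto_integral_of_dominated_convergence (fun _ => 1)
    (fun n => (integrable_negMulLog_condExp hZ z).aestronglyMeasurable) (integrable_const 1)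
    (fun n => (ae_condExp_indicator_mem_Icc (hZ (measurableSet_singleton z))).mono
      fun _ hω => abs_negMulLog_le_one hω) ?_
  filter_upwards [tendsto_ae_condExp (μ := μ) (ℱ := ℱ) ((Z ⁻¹' {z}).indicator fun _ => 1)] with ω hω
  exact (Real.continuous_negMulLog.tendsto _).comp hω

theorem shannonEntropy_prodMk_eq_add (hY : Measurable Y) (hZ : Measurable Z) :
    shannonEntropy μ (fun ω => (Y ω, Z ω)) = shannonEntropy μ Y +
      condShannonEntropy (MeasurableSpace.comap Y inferInstance) μ Z := by
  set p := fun y z => μ.real ((fun ω => (Y ω, Z ω)) ⁻¹' {(y, z)})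
  have hmarg (y : ι) : ∑ z, p y z = μ.real (Y ⁻¹' {y}) := by
    rw [← measureReal_biUnion_finset]
    · congr 1
      ext
      simp
    · exact fun z _ z' _ hne => (disjoint_singleton.2 fun h => hne (Prod.mk.inj h).2).preimage _
    · exact fun z _ => (hY.prodMk hZ) (measurableSet_singleton _)
  have hcond : condShannonEntropy (MeasurableSpace.comap Y inferInstance) μ Z =
      ∑ y, μ.real (Y ⁻¹' {y}) * ∑ z, Real.negMulLog (p y z / μ.real (Y ⁻¹' {y})) := by
    rw [← integral_comp_eq_sum hY fun y => ∑ z, Real.negMulLog (p y z / μ.real (Y ⁻¹' {y})),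
      condShannonEntropy]
    refine integral_congr_ae ?_
    filter_upwards [ae_all_iff.2 (condExp_comap_eq_div (μ := μ) hY hZ)] with ω hω
    simp only [hω, p]
  rw [hcond, shannonEntropy, shannonEntropy, Fintype.sum_prod_type, ← Finset.sum_add_distrib]
  refine Finset.sum_congr rfl fun y _ => ?_
  set P := μ.real (Y ⁻¹' {y})
  have hchain (z : κ) : Real.negMulLog (p y z) =
      p y z * -Real.log P + P * Real.negMulLog (p y z / P) := by
    by_cases hP : P = 0
    · have : p y z = 0 := le_antisymm ((measureReal_mono fun ω hω => (Prod.mk.inj hω).1).trans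
        hP.le) measureReal_nonneg
      simp [this]
    · conv_lhs => rw [← mul_div_cancel₀ (p y z) hP, Real.negMulLog_mul, Real.negMulLog]
      field_simp
  rw [Finset.sum_congr rfl fun z _ => hchain z, Finset.sum_add_distrib, ← Finset.sum_mul, hmarg,
    ← Finset.mul_sum, Real.negMulLog]
  ring

lemma ae_condExp_indicator_eq_zero (hm : m ≤ mΩ) {f : Ω → ℝ} (hf : StronglyMeasurable[m] f)
    {s : Set Ω} (hs : MeasurableSet s) (hfs : ∀ᵐ ω ∂μ, ω ∈ s → f ω ≠ 0) :
    ∀ᵐ ω ∂μ, f ω = 0 → (μ⟦s|m⟧) ω = 0 := by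
  have hzero : MeasurableSet[m] (f ⁻¹' {0}) := hf.measurable (measurableSet_singleton 0)
  have hint : Integrable (s.indicator fun _ => (1 : ℝ)) μ := (integrable_const 1).indicator hs
  have hnull : μ.real (s ∩ f ⁻¹' {0}) = 0 := by
    rw [measureReal_eq_zero_iff, measure_eq_zero_iff_ae_notMem]
    filter_upwards [hfs] with ω hω hmem using hω hmem.1 hmem.2
  have hset := setIntegral_condExp hm hint hzero
  rw [setIntegral_indicator hs, setIntegral_const, smul_eq_mul, mul_one, inter_comm, hnull,
    setIntegral_eq_zero_iff_of_nonneg_ae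
      (ae_restrict_of_ae ((ae_condExp_indicator_mem_Icc hs).mono fun _ h => h.1))
      integrable_condExp.integrableOn] at hset
  exact (ae_restrict_iff' (hm _ hzero)).1 hset

lemma integral_neg_log_eq_sum (hm : m ≤ mΩ) {q : κ → Ω → ℝ} (hZ : Measurable Z)
    (hqm : ∀ z, StronglyMeasurable[m] (q z))
    (hint : Integrable (fun ω => -Real.log (q (Z ω) ω)) μ) :
    (∀ z, Integrable (fun ω => (μ⟦Z ⁻¹' {z}|m⟧) ω * -Real.log (q z ω)) μ) ∧
    ∫ ω, -Real.log (q (Z ω) ω) ∂μ =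
      ∑ z, ∫ ω, (μ⟦Z ⁻¹' {z}|m⟧) ω * -Real.log (q z ω) ∂μ := by
  classical
  have hind (z : κ) : (fun ω => -Real.log (q z ω)) * (Z ⁻¹' {z}).indicator (fun _ => 1) =
      (Z ⁻¹' {z}).indicator fun ω => -Real.log (q (Z ω) ω) := by
    funext ω
    by_cases hω : Z ω = z <;> simp [hω]
  have hindInt (z : κ) := hint.indicator (hZ (measurableSet_singleton z))
  have hpull (z : κ) := condExp_mul_of_stronglyMeasurable_left (m := m) (μ := μ)
    (f := fun ω => -Real.log (q z ω)) (g := (Z ⁻¹' {z}).indicator fun _ => 1)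
    (Real.measurable_log.comp (hqm z).measurable).neg.stronglyMeasurable
    (by rw [hind]; exact hindInt z)
    ((integrable_const 1).indicator (hZ (measurableSet_singleton z)))
  simp only [hind, Pi.mul_def, mul_comm (-Real.log _)] at hpull
  refine ⟨fun z => integrable_condExp.congr (hpull z), ?_⟩
  calc
    _ = ∫ ω, ∑ z, (Z ⁻¹' {z}).indicator (fun ω => -Real.log (q (Z ω) ω)) ω ∂μ := by
      simp [indicator_apply]
    _ = ∑ z, ∫ ω, (Z ⁻¹' {z}).indicator (fun ω => -Real.log (q (Z ω) ω)) ω ∂μ :=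
      integral_finsetSum _ fun z _ => hindInt z
    _ = _ := Finset.sum_congr rfl fun z _ => by
      rw [← integral_condExp hm, integral_congr_ae (hpull z)]

lemma ae_eq_of_sum_integral_le {α β : Type*} [Fintype β] [MeasurableSpace α] {ν : Measure α}
    {f g : β → α → ℝ} (hf : ∀ i, Integrable (f i) ν) (hg : ∀ i, Integrable (g i) ν)
    (hfg : ∀ i, f i ≤ᵐ[ν] g i)
    (hle : ∑ i, ∫ x, g i x ∂ν ≤ ∑ i, ∫ x, f i x ∂ν) (i : β) : f i =ᵐ[ν] g i := by
  have hmono (i : β) := integral_mono_ae (hf i) (hg i) (hfg i)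
  exact (integral_eq_iff_of_ae_le (hf i) (hg i) (hfg i)).1 <|
    (Finset.sum_eq_sum_iff_of_le fun i _ => hmono i).1
      (hle.antisymm' (Finset.sum_le_sum fun i _ => hmono i)) i (Finset.mem_univ i)

/-- The equality case of Gibbs' inequality, conditionally on `m`. -/
theorem condExp_eq_of_integral_neg_log_le (hm : m ≤ mΩ) {q : κ → Ω → ℝ} (hZ : Measurable Z)
    (hqm : ∀ z, StronglyMeasurable[m] (q z)) (hq0 : ∀ z ω, 0 ≤ q z ω)
    (hq1 : ∀ᵐ ω ∂μ, ∑ z, q z ω ≤ 1) (hqZ : ∀ᵐ ω ∂μ, q (Z ω) ω ≠ 0)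
    (hint : Integrable (fun ω => -Real.log (q (Z ω) ω)) μ)
    (hle : ∫ ω, -Real.log (q (Z ω) ω) ∂μ ≤ condShannonEntropy m μ Z) (z : κ) :
    μ⟦Z ⁻¹' {z}|m⟧ =ᵐ[μ] q z := by
  have hZm (z : κ) : MeasurableSet (Z ⁻¹' {z}) := hZ (measurableSet_singleton z)
  obtain ⟨hcross, hsum⟩ := integral_neg_log_eq_sum hm hZ hqm hint
  have hqint (z : κ) : Integrable (q z) μ :=
    .of_bound ((hqm z).mono hm).aestronglyMeasurable 1 <| hq1.mono fun ω hω => by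
      rw [Real.norm_of_nonneg (hq0 z ω)]
      exact (Finset.single_le_sum (fun z _ => hq0 z ω) (Finset.mem_univ z)).trans hω
  have hqp (z : κ) : ∀ᵐ ω ∂μ, q z ω = 0 → (μ⟦Z ⁻¹' {z}|m⟧) ω = 0 :=
    ae_condExp_indicator_eq_zero hm (hqm z) (hZm z) <| by
      filter_upwards [hqZ] with ω hω hz
      rwa [← show Z ω = z from hz]
  have hq : ∑ z, ∫ ω, q z ω ∂μ ≤ 1 := by
    rw [← integral_finsetSum _ fun z _ => hqint z]
    simpa using integral_mono_ae (integrable_finsetSum _ fun z _ => hqint z)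
      (integrable_const 1) hq1
  have hgibbs := ae_eq_of_sum_integral_le (fun z => integrable_negMulLog_condExp hZ z)
    (fun z => ((hcross z).add (hqint z)).sub integrable_condExp)
    (fun z => by
      filter_upwards [hqp z, ae_condExp_indicator_mem_Icc (hZm z)] with ω hqp hp
      exact negMulLog_le_neg_mul_log_add_sub hp.1 (hq0 z ω) hqp)
    (by
      rw [condShannonEntropy, integral_finsetSum _ fun z _ => integrable_negMulLog_condExp hZ z,
        hsum] at hle
      simp only [integral_sub' ((hcross _).add (hqint _)) integrable_condExp,
        integral_add' (hcross _) (hqint _), integral_condExp hm, integral_indicator_const _ (hZm _),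
        smul_eq_mul, mul_one, Finset.sum_sub_distrib, Finset.sum_add_distrib,
        sum_measureReal_fiber hZ]
      linarith)
  filter_upwards [hgibbs z, hqp z, ae_condExp_indicator_mem_Icc (hZm z)] with ω hD hqp hp
  exact eq_of_neg_mul_log_add_sub_le hp.1 (hq0 z ω) hqp hD.ge

end CondEntropy

/-! ### The past and the entropy rate -/

section PastEntropy

open scoped Topology

variable {A : Type*} [MeasurableSpace A]

/-- The filtration of the past: the `n`-th σ-algebra is generated by the coordinates
`1 - n, …, 0`. -/
def pastFiltration (A : Type*) [MeasurableSpace A] :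
    Filtration ℕ (MeasurableSpace.pi : MeasurableSpace (ℤ → A)) where
  seq n := MeasurableSpace.comap (window (1 - n) n) inferInstance
  mono' n k hnk := by
    have hrestrict : window (1 - n) n =
        (fun (w : Fin k → A) (i : Fin n) => w ⟨i + (k - n), by omega⟩) ∘ window (1 - k) k := by
      funext x i
      simp only [window, Function.comp_apply]
      congr 1
      push_cast [hnk]
      ring
    change MeasurableSpace.comap (window (1 - n) n) _ ≤ _
    rw [hrestrict, ← MeasurableSpace.comap_comp]
    exact MeasurableSpace.comap_mono
      (measurable_pi_iff.2 fun i => measurable_pi_apply _).comap_le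
  le' n := (measurable_window _ n).comap_le

/-- The σ-algebra of the events that depend on the coordinates up to `0` only. -/
abbrev pastAlgebra (A : Type*) [MeasurableSpace A] : MeasurableSpace (ℤ → A) :=
  ⨆ n, pastFiltration A n

lemma pastAlgebra_le : pastAlgebra A ≤ MeasurableSpace.pi :=
  iSup_le (pastFiltration A).le

lemma measurable_pastAlgebra_past [Finite A] [MeasurableSingletonClass A] {β : Type*}
    [MeasurableSpace β] (n : ℕ) (F : List A → β) :
    Measurable[pastAlgebra A] fun x => F (past x n) :=
  ((measurable_of_countable fun w : Fin n → A => F (List.ofFn w)).comp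
    (comap_measurable (window (1 - n) n))).mono (le_iSup (fun n => pastFiltration A n) n) le_rfl

variable [Fintype A] [MeasurableSingletonClass A] {μ : Measure (ℤ → A)} [IsProbabilityMeasure μ]

lemma blockEntropy_succ (hμ : MeasurePreserving shift μ μ) (n : ℕ) :
    blockEntropy μ (n + 1) =
      blockEntropy μ n + condShannonEntropy (pastFiltration A n) μ fun x => x 1 := by
  have hsnoc : window (1 - n) (n + 1) =
      ((Equiv.prodComm _ _).trans (Fin.snocEquiv fun _ => A)) ∘
        fun x : ℤ → A => (window (1 - n) n x, x 1) := by
    funext x i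
    cases i using Fin.lastCases <;> simp [window, Fin.snocEquiv]
  rw [blockEntropy_eq_window hμ (1 - n), blockEntropy_eq_window hμ (1 - n), hsnoc,
    shannonEntropy_equiv_comp]
  exact shannonEntropy_prodMk_eq_add (measurable_window _ n) (measurable_pi_apply 1)

lemma blockEntropy_eq_sum_condShannonEntropy (hμ : MeasurePreserving shift μ μ) (n : ℕ) :
    blockEntropy μ n =
      ∑ i ∈ Finset.range n, condShannonEntropy (pastFiltration A i) μ fun x => x 1 := by
  induction n with
  | zero => simp [blockEntropy_eq, shannonEntropy, Subsingleton.eq_univ_of_nonempty]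
  | succ n ih => rw [Finset.sum_range_succ, ← ih, blockEntropy_succ hμ]

theorem le_condShannonEntropy_pastAlgebra (hμ : MeasurePreserving shift μ μ) {h : ℝ}
    (hlow : ∀ n : ℕ, n * h ≤ blockEntropy μ n) :
    h ≤ condShannonEntropy (pastAlgebra A) μ fun x => x 1 := by
  have hlim := (tendsto_condShannonEntropy (μ := μ) (pastFiltration A)
    (measurable_pi_apply (1 : ℤ))).cesaro
  refine ge_of_tendsto hlim ((eventually_gt_atTop 0).mono fun n hn => ?_)
  rw [← blockEntropy_eq_sum_condShannonEntropy hμ, le_inv_mul_iff₀ (Nat.cast_pos.2 hn)]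
  exact hlow n

end PastEntropy

/-! ### Transition probabilities between states -/

section Coboundary

variable {Ω : Type*} [MeasurableSpace Ω] {μ : Measure Ω} {T : Ω → Ω} {g : Ω → ℝ} {c : ℝ}

/-- The truncation of a real number to the interval `[-n, n]`. -/
def clamp (n : ℕ) (r : ℝ) : ℝ := max (-n) (min n r)

lemma abs_clamp_le (n : ℕ) (r : ℝ) : |clamp n r| ≤ n :=
  abs_le.2 ⟨le_max_left _ _, max_le (neg_le_self n.cast_nonneg) (min_le_left _ _)⟩

lemma clamp_eq_self {n : ℕ} {r : ℝ} (hr : |r| ≤ n) : clamp n r = r := by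
  rw [clamp, min_eq_right (le_of_abs_le hr), max_eq_right (neg_le_of_abs_le hr)]

lemma clamp_le_add_clamp {r s : ℝ} (hc : 0 ≤ c) (hrs : s ≤ c + r) (n : ℕ) :
    clamp n s ≤ c + clamp n r := by
  simp only [clamp]
  grind

@[fun_prop]
lemma continuous_clamp (n : ℕ) : Continuous (clamp n) :=
  continuous_const.max (continuous_const.min continuous_id)

lemma integral_add_clamp_sub_clamp [IsProbabilityMeasure μ] (hT : MeasurePreserving T μ μ)
    (hg : Measurable g) (c : ℝ) (n : ℕ) :
    Integrable (fun x => c + clamp n (g x) - clamp n (g (T x))) μ ∧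
      ∫ x, (c + clamp n (g x) - clamp n (g (T x))) ∂μ = c := by
  have hint : Integrable (fun x => clamp n (g x)) μ :=
    .of_bound (by fun_prop) n (.of_forall fun x => abs_clamp_le n (g x))
  have hintT : Integrable (fun x => clamp n (g (T x))) μ := hT.integrable_comp_of_integrable hint
  have hcomp : ∫ x, clamp n (g (T x)) ∂μ = ∫ x, clamp n (g x) ∂μ := by
    rw [← integral_map (f := fun y => clamp n (g y)) hT.measurable.aemeasurable (by fun_prop),
      hT.map_eq]
  have hadd : Integrable (fun x => c + clamp n (g x)) μ := (integrable_const c).add hint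
  refine ⟨hadd.sub hintT, ?_⟩
  rw [integral_sub hadd hintT, integral_add (integrable_const c) hint, hcomp,
    add_sub_cancel_right]
  simp

/-- Truncating `g` reduces this to Fatou's lemma. -/
theorem lintegral_coboundary_le [IsProbabilityMeasure μ] (hT : MeasurePreserving T μ μ)
    (hg : Measurable g) (hc : 0 ≤ c) (hnonneg : ∀ᵐ x ∂μ, 0 ≤ c + g x - g (T x)) :
    ∫⁻ x, ENNReal.ofReal (c + g x - g (T x)) ∂μ ≤ ENNReal.ofReal c := by
  have hclamp (n : ℕ) : ∀ᵐ x ∂μ, 0 ≤ c + clamp n (g x) - clamp n (g (T x)) :=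
    hnonneg.mono fun x hx => sub_nonneg.2 (clamp_le_add_clamp hc (sub_nonneg.1 hx) n)
  have := hT.measurable
  calc
    ∫⁻ x, ENNReal.ofReal (c + g x - g (T x)) ∂μ
      = ∫⁻ x, liminf (fun n : ℕ =>
          ENNReal.ofReal (c + clamp n (g x) - clamp n (g (T x)))) atTop ∂μ := by
        refine lintegral_congr fun x => (tendsto_nhds_of_eventually_eq ?_).liminf_eq.symm
        filter_upwards [eventually_ge_atTop ⌈max |g x| |g (T x)|⌉₊] with n hn
        have hn := max_le_iff.1 (Nat.ceil_le.1 hn)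
        rw [clamp_eq_self hn.1, clamp_eq_self hn.2]
    _ ≤ liminf (fun n : ℕ =>
          ∫⁻ x, ENNReal.ofReal (c + clamp n (g x) - clamp n (g (T x))) ∂μ) atTop :=
        lintegral_liminf_le fun n => by fun_prop
    _ = ENNReal.ofReal c := by
        simp_rw [← ofReal_integral_eq_lintegral_ofReal
          (integral_add_clamp_sub_clamp hT hg c _).1 (hclamp _),
          (integral_add_clamp_sub_clamp hT hg c _).2, liminf_const]

lemma integral_coboundary_le [IsProbabilityMeasure μ] (hT : MeasurePreserving T μ μ)
    (hg : Measurable g) (hc : 0 ≤ c) (hnonneg : ∀ᵐ x ∂μ, 0 ≤ c + g x - g (T x)) :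
    Integrable (fun x => c + g x - g (T x)) μ ∧ ∫ x, (c + g x - g (T x)) ∂μ ≤ c := by
  have hle := lintegral_coboundary_le hT hg hc hnonneg
  have hmeas : AEStronglyMeasurable (fun x => c + g x - g (T x)) μ := by
    have := hT.measurable
    fun_prop
  refine ⟨(lintegral_ofReal_ne_top_iff_integrable hmeas hnonneg).1
    (hle.trans_lt ENNReal.ofReal_lt_top).ne, ?_⟩
  rw [integral_eq_lintegral_of_nonneg_ae hnonneg hmeas]
  exact ENNReal.toReal_le_of_le_ofReal hc hle

end Coboundary

section Recurrence

variable {A : Type*} [MeasurableSpace A] {μ : Measure (ℤ → A)}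

lemma ae_exists_shiftBy_mul_mem [IsFiniteMeasure μ] (hμ : MeasurePreserving shift μ μ) {d : ℤ}
    (hd : d * d = 1) {E : Set (ℤ → A)} (hE : MeasurableSet E)
    (hreach : ∀ᵐ x ∂μ, ∃ t : ℤ, shiftBy t x ∈ E) :
    ∀ᵐ x ∂μ, ∃ n : ℕ, shiftBy (n * d) x ∈ E := by
  have hrec := (measurePreserving_shiftBy hμ d).conservative.ae_mem_imp_frequently_image_mem
    hE.nullMeasurableSet
  have hrec' : ∀ᵐ x ∂μ, ∀ t : ℤ, shiftBy t x ∈ E →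
      ∃ᶠ n : ℕ in atTop, (shiftBy d)^[n] (shiftBy t x) ∈ E :=
    ae_all_iff.2 fun t => (measurePreserving_shiftBy hμ t).quasiMeasurePreserving.ae hrec
  filter_upwards [hreach, hrec'] with x ⟨t, ht⟩ hx
  obtain ⟨n, hn, hmem⟩ := frequently_atTop.1 (hx t ht) t.natAbs
  rw [iterate_shiftBy, shiftBy_shiftBy] at hmem
  have hpos : 0 ≤ n + t * d := by
    rcases Int.isUnit_iff.1 (IsUnit.of_mul_eq_one d hd) with rfl | rfl <;> omega
  refine ⟨(n + t * d).toNat, ?_⟩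
  rwa [Int.toNat_of_nonneg hpos, add_mul, mul_assoc, hd, mul_one]

end Recurrence

/-- The states that communicate with the state `S`. -/
def communicatingClass {A : Type*} (S : Set (ℕ → A)) : Set (Set (ℕ → A)) :=
  {T | (∃ v, leftQuotient S v = T) ∧ ∃ u, leftQuotient T u = S}

section StateFunctions

variable {A : Type*} {X : Set (ℤ → A)} {S T : Set (ℕ → A)} {x : ℤ → A}

/-- The value of `F` at the state of `x`; a measurable function of the past of `x`. -/
noncomputable def stateValue (X : Set (ℤ → A)) (F : Set (ℕ → A) → ℝ) (x : ℤ → A) : ℝ :=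
  liminf (fun n => F (fol X (past x n))) atTop

lemma stateValue_eq (F : Set (ℕ → A) → ℝ) (hx : x ∈ stateSet X T) : stateValue X F x = F T :=
  (liminf_congr (hx.mono fun _ hn => congrArg F hn)).trans (liminf_const _)

variable [Finite A] [MeasurableSpace A] [MeasurableSingletonClass A]

lemma measurable_stateValue (X : Set (ℤ → A)) (F : Set (ℕ → A) → ℝ) :
    Measurable[pastAlgebra A] (stateValue X F) :=
  Measurable.liminf fun n => measurable_pastAlgebra_past n fun w => F (fol X w)

lemma ae_exists_mem_communicatingClass {μ : Measure (ℤ → A)} [IsFiniteMeasure μ]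
    (hμ : MeasurePreserving shift μ μ) (hreach : ∀ᵐ x ∂μ, ∃ t : ℤ, shiftBy t x ∈ stateSet X S) :
    ∀ᵐ x ∂μ, ∃ T ∈ communicatingClass S, x ∈ stateSet X T := by
  filter_upwards [ae_exists_shiftBy_mul_mem hμ (d := 1) rfl (measurableSet_stateSet X S) hreach,
    ae_exists_shiftBy_mul_mem hμ (d := -1) rfl (measurableSet_stateSet X S) hreach]
    with x ⟨n, hn⟩ ⟨m, hm⟩
  have hx := shiftBy_mem_stateSet hm m
  rw [shiftBy_shiftBy, mul_neg_one, add_neg_cancel, shiftBy_zero] at hx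
  rw [mul_one] at hn
  exact ⟨_, ⟨⟨_, rfl⟩, _, (shiftBy_mem_stateSet_iff hx n).1 hn⟩, hx⟩

end StateFunctions

/-- The Markov transition probability from the state `T` along the letter `a`: the Doob transform
of the uniform weight `e ^ (-hTop X)` by the superharmonic function `passageWeight (hTop X) S`. -/
noncomputable def transitionProb {A : Type*} (X : Set (ℤ → A)) (S : Set (ℕ → A)) (a : A)
    (T : Set (ℕ → A)) : ℝ :=
  Real.exp (-hTop X) * (passageWeight (hTop X) S (leftQuotient T [a])).toReal /
    (passageWeight (hTop X) S T).toReal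

section Transition

open scoped ProbabilityTheory

variable {A : Type*} {X : Set (ℤ → A)} {w : List A} {T : Set (ℕ → A)}

lemma transitionProb_nonneg (X : Set (ℤ → A)) (S : Set (ℕ → A)) (a : A) (T : Set (ℕ → A)) :
    0 ≤ transitionProb X S a T := by
  unfold transitionProb
  positivity

lemma toReal_expWeight_singleton (h : ℝ) (a : A) : (expWeight h [a]).toReal = Real.exp (-h) := by
  rw [expWeight, ENNReal.toReal_ofReal (Real.exp_pos _).le]
  simp

lemma sum_transitionProb_le_one [Fintype A] (hX : shift '' X = X) (hw : (fol X w).Nonempty)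
    (T : Set (ℕ → A)) : ∑ a, transitionProb X (fol X w) a T ≤ 1 := by
  simp only [transitionProb]
  rw [← Finset.sum_div]
  obtain htop | hfin := eq_or_ne (passageWeight (hTop X) (fol X w) T) ⊤
  · simp [htop]
  refine div_le_one_of_le₀ ?_ ENNReal.toReal_nonneg
  have hle := sum_expWeight_mul_passageWeight_le hX hw T
  refine le_of_eq_of_le ?_ (ENNReal.toReal_mono hfin hle)
  rw [ENNReal.toReal_sum fun a ha => (ENNReal.sum_ne_top.1 (ne_top_of_le_ne_top hfin hle) a ha)]
  simp only [ENNReal.toReal_mul, toReal_expWeight_singleton]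

lemma transitionProb_le_one [Finite A] (hX : shift '' X = X) (hw : (fol X w).Nonempty) (a : A)
    (T : Set (ℕ → A)) : transitionProb X (fol X w) a T ≤ 1 := by
  have := Fintype.ofFinite A
  exact (Finset.single_le_sum (fun b _ => transitionProb_nonneg X _ b T)
    (Finset.mem_univ a)).trans (sum_transitionProb_le_one hX hw T)

lemma toReal_passageWeight_pos [Finite A] (hX : shift '' X = X) (hw : (fol X w).Nonempty)
    (hT : T ∈ communicatingClass (fol X w)) :
    0 < (passageWeight (hTop X) (fol X w) T).toReal := by
  obtain ⟨⟨v, hv⟩, u, hu⟩ := hT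
  exact ENNReal.toReal_pos (passageWeight_ne_zero hX hw hu) (passageWeight_ne_top hX hw hv)

lemma neg_log_transitionProb [Finite A] (hX : shift '' X = X) (hw : (fol X w).Nonempty)
    (hT : T ∈ communicatingClass (fol X w)) {a : A}
    (hTa : leftQuotient T [a] ∈ communicatingClass (fol X w)) :
    -Real.log (transitionProb X (fol X w) a T) =
      hTop X + Real.log (passageWeight (hTop X) (fol X w) T).toReal -
        Real.log (passageWeight (hTop X) (fol X w) (leftQuotient T [a])).toReal := by
  have hT := toReal_passageWeight_pos hX hw hT
  have hTa := toReal_passageWeight_pos hX hw hTa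
  rw [transitionProb, Real.log_div (by positivity) hT.ne',
    Real.log_mul (Real.exp_pos _).ne' hTa.ne', Real.log_exp]
  ring

variable [MeasurableSpace A] [MeasurableSingletonClass A] {μ : Measure (ℤ → A)}
  [IsProbabilityMeasure μ]

lemma ae_neg_log_transitionProb [Finite A] (hX : shift '' X = X) (hw : (fol X w).Nonempty)
    (hμ : MeasurePreserving shift μ μ)
    (hreach : ∀ᵐ x ∂μ, ∃ t : ℤ, shiftBy t x ∈ stateSet X (fol X w)) :
    ∀ᵐ x ∂μ, 0 < stateValue X (transitionProb X (fol X w) (x 1)) x ∧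
      -Real.log (stateValue X (transitionProb X (fol X w) (x 1)) x) = hTop X +
        stateValue X (fun T => Real.log (passageWeight (hTop X) (fol X w) T).toReal) x -
        stateValue X (fun T => Real.log (passageWeight (hTop X) (fol X w) T).toReal) (shift x) := by
  have hclass := ae_exists_mem_communicatingClass hμ hreach
  filter_upwards [hclass, hμ.quasiMeasurePreserving.ae hclass] with x ⟨T, hT, hxT⟩ ⟨T', hT', hxT'⟩
  obtain rfl : leftQuotient T [x 1] = T' := by
    simpa [block_succ x 1 0] using (shiftBy_mem_stateSet_iff hxT 1).1 hxT'
  rw [stateValue_eq _ hxT, stateValue_eq _ hxT, stateValue_eq _ hxT']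
  have := toReal_passageWeight_pos hX hw hT
  have := toReal_passageWeight_pos hX hw hT'
  exact ⟨by unfold transitionProb; positivity, neg_log_transitionProb hX hw hT hT'⟩

/-- The cross entropy of the true transition probabilities relative to `transitionProb` is at most
`hTop X`, so by the equality case of Gibbs' inequality a measure of entropy `hTop X` has these
transition probabilities. -/
theorem condExp_eq_transitionProb [Fintype A] (hX : shift '' X = X) (hw : (fol X w).Nonempty)
    (hμ : MeasurePreserving shift μ μ)
    (hreach : ∀ᵐ x ∂μ, ∃ t : ℤ, shiftBy t x ∈ stateSet X (fol X w))
    (hlow : ∀ n : ℕ, n * hTop X ≤ blockEntropy μ n) (a : A) :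
    μ⟦{x | x 1 = a}|pastAlgebra A⟧ =ᵐ[μ] stateValue X (transitionProb X (fol X w) a) := by
  set φ : Set (ℕ → A) → ℝ := fun T => Real.log (passageWeight (hTop X) (fol X w) T).toReal
  have hlog := ae_neg_log_transitionProb hX hw hμ hreach
  have hclass := ae_exists_mem_communicatingClass hμ hreach
  have hsum : ∀ᵐ x ∂μ, ∑ a, stateValue X (transitionProb X (fol X w) a) x ≤ 1 := by
    filter_upwards [hclass] with x ⟨T, _, hxT⟩
    simpa only [stateValue_eq _ hxT] using sum_transitionProb_le_one hX hw T
  have hnonneg : ∀ᵐ x ∂μ, 0 ≤ hTop X + stateValue X φ x - stateValue X φ (shift x) := by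
    filter_upwards [hlog, hclass] with x hx ⟨T, _, hxT⟩
    rw [← hx.2]
    refine neg_nonneg.2 (Real.log_nonpos hx.1.le ?_)
    rw [stateValue_eq _ hxT]
    exact transitionProb_le_one hX hw _ T
  have hcob := integral_coboundary_le hμ ((measurable_stateValue X φ).mono pastAlgebra_le le_rfl)
    (hTop_nonneg X) hnonneg
  have heq : (fun x => -Real.log (stateValue X (transitionProb X (fol X w) (x 1)) x)) =ᵐ[μ]
      fun x => hTop X + stateValue X φ x - stateValue X φ (shift x) := hlog.mono fun x hx => hx.2
  refine condExp_eq_of_integral_neg_log_le (Z := fun x : ℤ → A => x 1)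
    (q := fun a => stateValue X (transitionProb X (fol X w) a)) pastAlgebra_le
    (measurable_pi_apply 1) (fun a => (measurable_stateValue X _).stronglyMeasurable)
    (fun a x => ?_) hsum (hlog.mono fun x hx => hx.1.ne') (hcob.1.congr heq.symm) ?_ a
  · exact le_liminf_of_le
      (isCoboundedUnder_ge_of_le atTop fun n => transitionProb_le_one hX hw a _)
      (.of_forall fun n => transitionProb_nonneg ..)
  · rw [integral_congr_ae heq]
    exact hcob.2.trans (le_condShannonEntropy_pastAlgebra hμ hlow)

end Transition

/-! ### Uniqueness of the measure of maximal entropy through a state -/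

section Extensionality

variable {A : Type*} [MeasurableSpace A] {μ ν : Measure (ℤ → A)}

lemma ext_of_map_window_eq [IsFiniteMeasure μ] [IsFiniteMeasure ν]
    (h : ∀ a n, μ.map (window a n) = ν.map (window a n)) : μ = ν := by
  have hproj (ρ : Measure (ℤ → A)) :
      IsProjectiveLimit ρ fun I : Finset ℤ => ρ.map I.restrict := fun _ => rfl
  refine (hproj μ).unique (fun I => ?_) (P := fun I : Finset ℤ => μ.map I.restrict)
  set N := I.sup Int.natAbs
  have hN (i : I) : (i : ℤ).natAbs ≤ N := Finset.le_sup i.2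
  let g (w : Fin (2 * N + 1) → A) (i : I) : A := w ⟨(i + N : ℤ).toNat, by have := hN i; omega⟩
  have hg : Measurable g := measurable_pi_iff.2 fun i => measurable_pi_apply _
  have hcomp : I.restrict = g ∘ window (-N) (2 * N + 1) := by
    funext x i
    have : (i + N : ℤ).toNat = (i + N : ℤ) := Int.toNat_of_nonneg (by have := hN i; omega)
    simp [g, window, this]
  simp only [hcomp, ← Measure.map_map hg (measurable_window _ _), h]

lemma ext_of_measure_block_eq [Finite A] [MeasurableSingletonClass A] [IsFiniteMeasure μ]
    [IsFiniteMeasure ν] (hμ : MeasurePreserving shift μ μ) (hν : MeasurePreserving shift ν ν)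
    (h : ∀ u : List A, μ {x | block x 1 u.length = u} = ν {x | block x 1 u.length = u}) :
    μ = ν := by
  refine ext_of_map_window_eq fun a n => Measure.ext_of_singleton fun w => ?_
  have hblock {ρ : Measure (ℤ → A)} (hρ : MeasurePreserving shift ρ ρ) :
      ρ.map (window a n) {w} = ρ {x | block x 1 (List.ofFn w).length = List.ofFn w} := by
    rw [Measure.map_apply (measurable_window a n) (measurableSet_singleton w),
      ← measure_shiftBy_preimage hρ (a - 1) (measurableSet_block 1 _ fun v => v = List.ofFn w)]
    congr 1
    ext x
    have hwindow : window 1 n (shiftBy (a - 1) x) = window a n x := by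
      funext i
      simp [window, add_comm]
    simp [block_eq_ofFn_iff, hwindow]
  rw [hblock hμ, hblock hν, h]

end Extensionality

section Arrival

variable {A : Type*} {X : Set (ℤ → A)} {S T : Set (ℕ → A)} {v w : List A} {x : ℤ → A}

/-- The points that were in state `S` at time `-v.length` and have since read the word `v`. -/
def arrivalSet (X : Set (ℤ → A)) (S : Set (ℕ → A)) (v : List A) : Set (ℤ → A) :=
  {x | shiftBy (-v.length) x ∈ stateSet X S ∧ past x v.length = v}

lemma arrivalSet_nil (X : Set (ℤ → A)) (S : Set (ℕ → A)) : arrivalSet X S [] = stateSet X S := by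
  simp [arrivalSet]

lemma leftQuotient_take_eq_iff (hx : x ∈ arrivalSet X S v) {k : ℕ} (hk : k ≤ v.length) :
    leftQuotient S (v.take k) = T ↔ shiftBy (k - v.length) x ∈ stateSet X T := by
  rw [sub_eq_add_neg, ← shiftBy_shiftBy, shiftBy_mem_stateSet_iff hx.1, block_shiftBy]
  nth_rw 1 [← hx.2]
  rw [past, take_block _ _ hk, sub_eq_add_neg]

lemma arrivalSet_subset_stateSet (X : Set (ℤ → A)) (S : Set (ℕ → A)) (v : List A) :
    arrivalSet X S v ⊆ stateSet X (leftQuotient S v) := fun x hx => by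
  simpa using (leftQuotient_take_eq_iff hx le_rfl).1 rfl

lemma shiftBy_preimage_arrivalSet (X : Set (ℤ → A)) (S : Set (ℕ → A)) (v w : List A) :
    shiftBy w.length ⁻¹' arrivalSet X S (v ++ w) =
      arrivalSet X S v ∩ {x | block x 1 w.length = w} := by
  ext x
  have hshift : shiftBy (-(v ++ w).length) (shiftBy w.length x) = shiftBy (-v.length) x := by
    rw [shiftBy_shiftBy, List.length_append]
    congr 1
    push_cast
    ring
  have hpast : past (shiftBy w.length x) (v ++ w).length =
      past x v.length ++ block x 1 w.length := by
    rw [List.length_append, past_shiftBy_add]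
  simp only [arrivalSet, mem_preimage, mem_ofPred_eq, mem_inter_iff, hshift, hpast, and_assoc]
  rw [List.append_eq_append_iff_of_size_eq_left (length_past x _)]

lemma measurableSet_pastAlgebra_arrivalSet [Finite A] [MeasurableSpace A]
    [MeasurableSingletonClass A] (X : Set (ℤ → A)) (S : Set (ℕ → A)) (v : List A) :
    MeasurableSet[pastAlgebra A] (arrivalSet X S v) := by
  have hpast (x : ℤ → A) (n : ℕ) :
      past (shiftBy (-v.length) x) n = (past x (n + v.length)).take n := by
    have := past_shiftBy_add (shiftBy (-v.length) x) n v.length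
    rw [shiftBy_shiftBy, add_neg_cancel, shiftBy_zero] at this
    rw [this, List.take_left' (length_past _ n)]
  have heq : arrivalSet X S v = {x | (∃ N, ∀ n ≥ N, fol X ((past x (n + v.length)).take n) = S) ∧
      past x v.length = v} := by
    ext x
    simp only [arrivalSet, stateSet, eventually_atTop, mem_ofPred_eq, hpast]
  simp only [heq, ofPred_and, ofPred_exists, ofPred_forall]
  refine .inter (.iUnion fun N => .iInter fun n => .iInter fun _ => ?_) ?_
  · exact (@measurableSet_setOfPred _ (pastAlgebra A) _).2
      (measurable_pastAlgebra_past (n + v.length) fun u => fol X (u.take n) = S)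
  · exact (@measurableSet_setOfPred _ (pastAlgebra A) _).2
      (measurable_pastAlgebra_past v.length fun u => u = v)

/-- The words whose proper nonempty prefixes and whose full length do not lead `S` back to `S`. -/
def excursions (S : Set (ℕ → A)) : Set (List A) :=
  {v | ∀ k, 0 < k → k ≤ v.length → leftQuotient S (v.take k) ≠ S}

lemma exists_mem_arrivalSet_excursions {n : ℕ} (hx : shiftBy (n * (-1)) x ∈ stateSet X S) :
    ∃ v ∈ excursions S, x ∈ arrivalSet X S v := by
  classical
  have hex : ∃ n : ℕ, shiftBy (n * (-1)) x ∈ stateSet X S := ⟨n, hx⟩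
  set m := Nat.find hex
  have hlen : (past x m).length = m := length_past x m
  have hmem : x ∈ arrivalSet X S (past x m) :=
    ⟨by
      have hm := Nat.find_spec hex
      rwa [mul_neg_one, show Nat.find hex = _ from hlen.symm] at hm, by rw [hlen]⟩
  refine ⟨past x m, fun k hk0 hk hS => ?_, hmem⟩
  rw [leftQuotient_take_eq_iff hmem hk, hlen] at hS
  rw [hlen] at hk
  refine Nat.find_min hex (m := m - k) (by omega) ?_
  rwa [Nat.cast_sub hk, mul_neg_one, neg_sub]

lemma eq_of_mem_arrivalSet_excursions (hv : v ∈ excursions S) (hw : w ∈ excursions S)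
    (hxv : x ∈ arrivalSet X S v) (hxw : x ∈ arrivalSet X S w) : v = w := by
  wlog hle : v.length ≤ w.length generalizing v w
  · exact (this hw hv hxw hxv (by omega)).symm
  obtain hlt | heq := hle.lt_or_eq
  · refine absurd ?_ (hw (w.length - v.length) (by omega) (by omega))
    rw [leftQuotient_take_eq_iff hxw (by omega), Nat.cast_sub hle, sub_sub_cancel_left]
    exact hxv.1
  · rw [← hxv.2, ← hxw.2, heq]

variable [Finite A] [MeasurableSpace A] [MeasurableSingletonClass A] {μ : Measure (ℤ → A)}

lemma measurableSet_arrivalSet (X : Set (ℤ → A)) (S : Set (ℕ → A)) (v : List A) :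
    MeasurableSet (arrivalSet X S v) :=
  pastAlgebra_le _ (measurableSet_pastAlgebra_arrivalSet X S v)

lemma measure_arrivalSet_append (hμ : MeasurePreserving shift μ μ) (X : Set (ℤ → A))
    (S : Set (ℕ → A)) (v w : List A) :
    μ (arrivalSet X S (v ++ w)) = μ (arrivalSet X S v ∩ {x | block x 1 w.length = w}) := by
  rw [← shiftBy_preimage_arrivalSet, measure_shiftBy_preimage hμ _ (measurableSet_arrivalSet ..)]

lemma measure_eq_tsum_measure_arrivalSet_inter [IsFiniteMeasure μ]
    (hμ : MeasurePreserving shift μ μ) (hreach : ∀ᵐ x ∂μ, ∃ t : ℤ, shiftBy t x ∈ stateSet X S)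
    {B : Set (ℤ → A)} (hB : MeasurableSet B) :
    μ B = ∑' v : excursions S, μ (arrivalSet X S v ∩ B) := by
  have hcover : B =ᵐ[μ] ⋃ v : excursions S, arrivalSet X S v ∩ B := by
    filter_upwards [ae_exists_shiftBy_mul_mem hμ (d := -1) (by norm_num)
      (measurableSet_stateSet X S) hreach] with x ⟨n, hn⟩
    obtain ⟨v, hv, hxv⟩ := exists_mem_arrivalSet_excursions hn
    refine propext ⟨fun hxB => mem_iUnion.2 ⟨⟨v, hv⟩, hxv, hxB⟩, fun hx => ?_⟩
    obtain ⟨_, _, hxB⟩ := mem_iUnion.1 hx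
    exact hxB
  rw [measure_congr hcover, measure_iUnion ?_ fun v : excursions S =>
    (measurableSet_arrivalSet X S v).inter hB]
  exact fun v w hne => disjoint_left.2 fun x hxv hxw =>
    hne (Subtype.ext (eq_of_mem_arrivalSet_excursions v.2 w.2 hxv.1 hxw.1))

end Arrival

lemma toReal_passageWeight_mul_transitionProb {A : Type*} [Finite A]
    {X : Set (ℤ → A)} (hX : shift '' X = X) {w : List A} (hw : (fol X w).Nonempty)
    {T : Set (ℕ → A)} (hT : passageWeight (hTop X) (fol X w) T ≠ ⊤) (a : A) :
    (passageWeight (hTop X) (fol X w) T).toReal * transitionProb X (fol X w) a T =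
      Real.exp (-hTop X) * (passageWeight (hTop X) (fol X w) (leftQuotient T [a])).toReal := by
  obtain h0 | h0 := eq_or_ne (passageWeight (hTop X) (fol X w) T) 0
  · have := expWeight_mul_passageWeight_le hX hw T [a]
    rw [h0, nonpos_iff_eq_zero, mul_eq_zero, or_iff_right (expWeight_ne_zero _ _)] at this
    simp [h0, this]
  · exact mul_div_cancel₀ _ (ENNReal.toReal_ne_zero.2 ⟨h0, hT⟩)

section Uniqueness

open scoped ProbabilityTheory

variable {A : Type*} [Fintype A] [MeasurableSpace A] [MeasurableSingletonClass A]
  {X : Set (ℤ → A)} {w : List A} {μ ν : Measure (ℤ → A)} [IsProbabilityMeasure μ]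
  [IsProbabilityMeasure ν]

lemma measureReal_inter_eq_mul_transitionProb (hX : shift '' X = X) (hw : (fol X w).Nonempty)
    (hμ : MeasurePreserving shift μ μ)
    (hreach : ∀ᵐ x ∂μ, ∃ t : ℤ, shiftBy t x ∈ stateSet X (fol X w))
    (hlow : ∀ n : ℕ, n * hTop X ≤ blockEntropy μ n) {E : Set (ℤ → A)} {T : Set (ℕ → A)}
    (hE : MeasurableSet[pastAlgebra A] E) (hET : E ⊆ stateSet X T) (a : A) :
    μ.real (E ∩ {x | x 1 = a}) = μ.real E * transitionProb X (fol X w) a T := by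
  have ha : MeasurableSet {x : ℤ → A | x 1 = a} :=
    measurableSet_eq_fun (measurable_pi_apply 1) measurable_const
  calc μ.real (E ∩ {x | x 1 = a}) = ∫ x in E, (μ⟦{x | x 1 = a}|pastAlgebra A⟧) x ∂μ := by
        rw [setIntegral_condExp pastAlgebra_le ((integrable_const 1).indicator ha) hE,
          setIntegral_indicator ha, setIntegral_const, smul_eq_mul, mul_one]
    _ = ∫ x in E, stateValue X (transitionProb X (fol X w) a) x ∂μ :=
        integral_congr_ae
          (ae_restrict_of_ae (condExp_eq_transitionProb hX hw hμ hreach hlow a))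
    _ = ∫ _ in E, transitionProb X (fol X w) a T ∂μ :=
        setIntegral_congr_fun (pastAlgebra_le _ hE) fun _ hx => stateValue_eq _ (hET hx)
    _ = μ.real E * transitionProb X (fol X w) a T := by rw [setIntegral_const, smul_eq_mul]

lemma measure_arrivalSet (hX : shift '' X = X) (hw : (fol X w).Nonempty)
    (hμ : MeasurePreserving shift μ μ)
    (hreach : ∀ᵐ x ∂μ, ∃ t : ℤ, shiftBy t x ∈ stateSet X (fol X w))
    (hlow : ∀ n : ℕ, n * hTop X ≤ blockEntropy μ n) (v : List A) :
    μ (arrivalSet X (fol X w) v) = μ (stateSet X (fol X w)) *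
      (expWeight (hTop X) v * passageWeight (hTop X) (fol X w) (leftQuotient (fol X w) v)) := by
  rw [← ENNReal.toReal_eq_toReal_iff' (measure_ne_top _ _)
    (ENNReal.mul_ne_top (measure_ne_top _ _) (ENNReal.mul_ne_top (by simp [expWeight])
      (passageWeight_ne_top hX hw rfl)))]
  induction v using List.reverseRecOn with
  | nil => simp [arrivalSet_nil, expWeight_nil, passageWeight_self]
  | append_singleton v a ih =>
    have hblock : {x : ℤ → A | block x 1 [a].length = [a]} = {x | x 1 = a} := by
      ext x
      simp [block_succ x 1 0]
    have hstep := measureReal_inter_eq_mul_transitionProb hX hw hμ hreach hlow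
      (measurableSet_pastAlgebra_arrivalSet X (fol X w) v) (arrivalSet_subset_stateSet X _ v) a
    rw [measure_arrivalSet_append hμ, hblock, ← measureReal_def, hstep, measureReal_def, ih]
    simp only [ENNReal.toReal_mul, expWeight_append, toReal_expWeight_singleton, mul_assoc,
      toReal_passageWeight_mul_transitionProb hX hw (passageWeight_ne_top hX hw rfl),
      leftQuotient_append]

/-- Cutting at the last visit to the state gives every cylinder a measure proportional to the
measure of the state, with a factor that depends on the subshift only. -/
theorem eq_of_ae_exists_shiftBy_mem_stateSet (hX : shift '' X = X) (hw : (fol X w).Nonempty)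
    (hμ : MeasurePreserving shift μ μ) (hν : MeasurePreserving shift ν ν)
    (hreachμ : ∀ᵐ x ∂μ, ∃ t : ℤ, shiftBy t x ∈ stateSet X (fol X w))
    (hreachν : ∀ᵐ x ∂ν, ∃ t : ℤ, shiftBy t x ∈ stateSet X (fol X w))
    (hlowμ : ∀ n : ℕ, n * hTop X ≤ blockEntropy μ n)
    (hlowν : ∀ n : ℕ, n * hTop X ≤ blockEntropy ν n) : μ = ν := by
  set S := fol X w
  set K : List A → ENNReal := fun u => ∑' v : excursions S, expWeight (hTop X) (v.1 ++ u) *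
    passageWeight (hTop X) S (leftQuotient S (v.1 ++ u))
  have hcyl {ρ : Measure (ℤ → A)} [IsProbabilityMeasure ρ] (hρ : MeasurePreserving shift ρ ρ)
      (hreach : ∀ᵐ x ∂ρ, ∃ t : ℤ, shiftBy t x ∈ stateSet X S)
      (hlow : ∀ n : ℕ, n * hTop X ≤ blockEntropy ρ n) (u : List A) :
      ρ {x | block x 1 u.length = u} = ρ (stateSet X S) * K u := by
    rw [measure_eq_tsum_measure_arrivalSet_inter hρ hreach
      (measurableSet_block 1 _ fun v => v = u), ← ENNReal.tsum_mul_left]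
    exact tsum_congr fun v => by
      rw [← measure_arrivalSet_append hρ, measure_arrivalSet hX hw hρ hreach hlow]
  have hstate {ρ : Measure (ℤ → A)} [IsProbabilityMeasure ρ] (hρ : MeasurePreserving shift ρ ρ)
      (hreach : ∀ᵐ x ∂ρ, ∃ t : ℤ, shiftBy t x ∈ stateSet X S)
      (hlow : ∀ n : ℕ, n * hTop X ≤ blockEntropy ρ n) : ρ (stateSet X S) = (K [])⁻¹ := by
    refine ENNReal.eq_inv_of_mul_eq_one_left ?_
    rw [← hcyl hρ hreach hlow]
    simp
  exact ext_of_measure_block_eq hμ hν fun u => by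
    rw [hcyl hμ hreachμ hlowμ, hcyl hν hreachν hlowν, hstate hμ hreachμ hlowμ,
      hstate hν hreachν hlowν]

end Uniqueness

/-! ### Existence of measures of maximal entropy -/

section Misiurewicz

open scoped Topology ENNReal

section OrbitAverage

variable {A : Type*} [MeasurableSpace A] {ν : Measure (ℤ → A)} {n : ℕ}

/-- The average of the first `n` images of a measure under the shift. -/
noncomputable def orbitAverage (ν : Measure (ℤ → A)) (n : ℕ) : Measure (ℤ → A) :=
  (n : ℝ≥0∞)⁻¹ • ∑ t ∈ Finset.range n, ν.map (shiftBy t)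

lemma measureReal_orbitAverage [IsFiniteMeasure ν] (n : ℕ) {s : Set (ℤ → A)}
    (hs : MeasurableSet s) :
    (orbitAverage ν n).real s = ∑ t ∈ Finset.range n, (n : ℝ)⁻¹ * ν.real (shiftBy t ⁻¹' s) := by
  rw [orbitAverage, measureReal_ennreal_smul_apply, Measure.real, Measure.finsetSum_apply,
    ENNReal.toReal_sum fun t _ => by
      rw [Measure.map_apply (measurable_shiftBy _) hs]; exact measure_ne_top _ _, Finset.mul_sum]
  simp [Measure.map_apply (measurable_shiftBy _) hs, Measure.real]

lemma isProbabilityMeasure_orbitAverage [IsProbabilityMeasure ν] (hn : n ≠ 0) :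
    IsProbabilityMeasure (orbitAverage ν n) := by
  have hn' : (n : ℝ≥0∞) ≠ 0 := by exact_mod_cast hn
  constructor
  simp [orbitAverage, Measure.map_apply (measurable_shiftBy _) .univ,
    ENNReal.inv_mul_cancel hn' (ENNReal.natCast_ne_top n)]

lemma orbitAverage_apply_eq_zero {s : Set (ℤ → A)} (hs : MeasurableSet s)
    (hinv : ∀ t : ℤ, shiftBy t ⁻¹' s = s) (hν : ν s = 0) (n : ℕ) : orbitAverage ν n s = 0 := by
  simp [orbitAverage, Measure.map_apply (measurable_shiftBy _) hs, hinv, hν]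

lemma abs_measureReal_preimage_shift_sub_orbitAverage_le [IsProbabilityMeasure ν] (n : ℕ)
    {s : Set (ℤ → A)} (hs : MeasurableSet s) :
    |(orbitAverage ν n).real (shift ⁻¹' s) - (orbitAverage ν n).real s| ≤ (n : ℝ)⁻¹ := by
  have hstep (t : ℕ) :
      (shiftBy t : (ℤ → A) → ℤ → A) ⁻¹' (shift ⁻¹' s) = shiftBy (t + 1 : ℕ) ⁻¹' s := by
    ext x
    simp only [mem_preimage, shift_shiftBy, Nat.cast_succ]
  rw [measureReal_orbitAverage n (s := shift ⁻¹' s) (measurable_shiftBy 1 hs),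
    measureReal_orbitAverage n hs]
  simp only [hstep, ← Finset.mul_sum, ← mul_sub, ← Finset.sum_sub_distrib]
  rw [Finset.sum_range_sub (fun t : ℕ => ν.real (shiftBy t ⁻¹' s)), abs_mul,
    abs_of_nonneg (by positivity : (0 : ℝ) ≤ (n : ℝ)⁻¹)]
  refine mul_le_of_le_one_right (by positivity) (abs_sub_le_of_nonneg_of_le ?_ ?_ ?_ ?_)
  all_goals first | exact measureReal_nonneg | exact measureReal_le_one

end OrbitAverage

section Averages

variable {A : Type*} [Fintype A] [MeasurableSpace A] [MeasurableSingletonClass A]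
  {ν : Measure (ℤ → A)} [IsProbabilityMeasure ν] {m n : ℕ}

lemma sum_range_sum_range_add_mul (g : ℕ → ℝ) (m k : ℕ) :
    ∑ j ∈ Finset.range m, ∑ i ∈ Finset.range k, g (j + i * m) =
      ∑ t ∈ Finset.range (k * m), g t := by
  rw [Finset.sum_comm]
  induction k with
  | zero => simp
  | succ k ih =>
    rw [Finset.sum_range_succ, ih, Nat.succ_mul, Finset.sum_range_add]
    simp only [add_comm]

lemma shannonEntropy_window_le_sum_add {j k : ℕ} (hj : j + k * m ≤ n) (hn : n ≤ k * m + 2 * m) :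
    shannonEntropy ν (window 0 n) ≤
      ∑ i ∈ Finset.range k, shannonEntropy ν (window (j + i * m : ℕ) m) +
        2 * m * Real.log (Fintype.card A) := by
  obtain ⟨r, rfl⟩ := Nat.exists_eq_add_of_le hj
  have hjr : (j + r : ℝ) ≤ 2 * m := by exact_mod_cast (by omega : j + r ≤ 2 * m)
  have : 0 ≤ Real.log (Fintype.card A) := Real.log_natCast_nonneg _
  calc shannonEntropy ν (window 0 (j + k * m + r))
      ≤ shannonEntropy ν (window 0 j) + shannonEntropy ν (window (0 + j) (k * m)) +
          shannonEntropy ν (window (0 + (j + k * m : ℕ)) r) :=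
        (shannonEntropy_window_add_le _ _ _).trans (by
          gcongr; exact shannonEntropy_window_add_le _ _ _)
    _ ≤ j * Real.log (Fintype.card A) +
          ∑ i ∈ Finset.range k, shannonEntropy ν (window (0 + j + (i * m : ℕ)) m) +
          r * Real.log (Fintype.card A) := by
        gcongr
        · exact shannonEntropy_window_le _ _
        · exact shannonEntropy_window_mul_le _ _ _
        · exact shannonEntropy_window_le _ _
    _ = ∑ i ∈ Finset.range k, shannonEntropy ν (window (j + i * m : ℕ) m) +
          (j + r) * Real.log (Fintype.card A) := by
        simp only [zero_add, ← Nat.cast_add (R := ℤ)]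
        ring
    _ ≤ _ := by gcongr

/-- Each of the `m` ways of cutting `[0, n)` into blocks of length `m` bounds the entropy of the
window; together these blocks start at every time `t` at most once. -/
lemma mul_shannonEntropy_window_le (hm : 0 < m) (hmn : m ≤ n) :
    m * shannonEntropy ν (window 0 n) ≤
      ∑ t ∈ Finset.range n, shannonEntropy ν (window t m) +
        2 * m * m * Real.log (Fintype.card A) := by
  obtain ⟨k, hk⟩ : ∃ k, n / m = k + 1 := Nat.exists_eq_add_one.2 (Nat.div_pos hmn hm)
  have hlo : k * m + m ≤ n := by simpa [← Nat.succ_mul, ← hk] using Nat.div_mul_le_self n m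
  have hhi : n ≤ k * m + 2 * m := by
    have := Nat.lt_mul_div_succ n hm
    rw [hk] at this
    linarith
  calc m * shannonEntropy ν (window 0 n)
      = ∑ _j ∈ Finset.range m, shannonEntropy ν (window 0 n) := by simp
    _ ≤ ∑ j ∈ Finset.range m, (∑ i ∈ Finset.range k, shannonEntropy ν (window (j + i * m : ℕ) m) +
          2 * m * Real.log (Fintype.card A)) := by
        refine Finset.sum_le_sum fun j hj => shannonEntropy_window_le_sum_add ?_ hhi
        have := Finset.mem_range.1 hj
        omega
    _ = ∑ t ∈ Finset.range (k * m), shannonEntropy ν (window t m) +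
          2 * m * m * Real.log (Fintype.card A) := by
        rw [Finset.sum_add_distrib,
          sum_range_sum_range_add_mul (fun t : ℕ => shannonEntropy ν (window t m)),
          Finset.sum_const, Finset.card_range, nsmul_eq_mul]
        ring
    _ ≤ _ := by
        gcongr
        · exact fun _ _ _ => shannonEntropy_nonneg _
        · omega

lemma sum_shannonEntropy_window_le_orbitAverage (hn : n ≠ 0) (m : ℕ) :
    ∑ t ∈ Finset.range n, shannonEntropy ν (window t m) ≤
      n * shannonEntropy (orbitAverage ν n) (window 0 m) := by
  have hn' : (0 : ℝ) < n := by positivity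
  have hwindow (t : ℕ) : window 0 m ∘ shiftBy t = (window t m : (ℤ → A) → Fin m → A) := by
    funext x i
    simp [window, add_comm]
  have := sum_smul_shannonEntropy_le (s := Finset.range n) (c := fun _ => (n : ℝ)⁻¹)
    (fun _ _ => by positivity) (by simp [hn'.ne']) (ν := ν) (μ := orbitAverage ν n)
    (Y := fun t => window t m) (Z := window 0 m) fun w => by
      rw [measureReal_orbitAverage n (measurable_window 0 m (measurableSet_singleton w))]
      simp only [← preimage_comp, hwindow]
  rwa [← Finset.mul_sum, inv_mul_le_iff₀ hn'] at this

end Averages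

section EmpiricalMeasure

variable {Ω ι : Type*} [MeasurableSpace Ω] [Fintype ι] [MeasurableSpace ι]
  [MeasurableSingletonClass ι] {μ : Measure Ω} [IsProbabilityMeasure μ]

lemma log_le_shannonEntropy {Y : Ω → ι} (hY : Measurable Y) {c : ℝ}
    (h : ∀ i, μ.real (Y ⁻¹' {i}) ≤ c⁻¹) : Real.log c ≤ shannonEntropy μ Y := by
  rw [shannonEntropy_eq_integral hY, show Real.log c = ∫ _, Real.log c ∂μ by simp]
  refine integral_mono_ae (integrable_const _) (Integrable.of_finite.comp_measurable
    (g := fun i => -Real.log (μ.real (Y ⁻¹' {i}))) hY) ?_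
  filter_upwards [ae_measureReal_fiber_pos Y] with ω hω
  rw [le_neg, ← Real.log_inv]
  exact Real.log_le_log hω (h _)

end EmpiricalMeasure

lemma exists_measure_log_natCard_Lang_le {A : Type*} [Fintype A] [MeasurableSpace A]
    [MeasurableSingletonClass A] {X : Set (ℤ → A)} (hX : shift '' X = X) (hne : X.Nonempty)
    (n : ℕ) :
    ∃ ν : Measure (ℤ → A), IsProbabilityMeasure ν ∧ ν Xᶜ = 0 ∧
      Real.log (Nat.card (Lang X n)) ≤ shannonEntropy ν (window 0 n) := by
  have : Finite (Lang X n) :=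
    ((List.finite_length_eq A n).subset fun _ hu => hu.1).to_subtype
  have : Fintype (Lang X n) := .ofFinite _
  have : Nonempty (Lang X n) := hne.elim fun x hx => ⟨⟨_, block_mem_Lang hX hx 0 n⟩⟩
  let : MeasurableSpace (Lang X n) := ⊤
  have : MeasurableSingletonClass (Lang X n) := ⟨fun _ => trivial⟩
  choose pt hptX hpt using fun u : Lang X n => (mem_Lang_iff.1 u.2).2
  have hmeas : Measurable pt := measurable_from_top
  have hwindow := measurable_window (A := A) 0 n
  have hinj : (window 0 n ∘ pt).Injective := fun u v huv => Subtype.ext <| by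
    rw [← hpt u, ← hpt v]
    exact congrArg List.ofFn huv
  refine ⟨(ProbabilityTheory.uniformOn univ).map pt,
    Measure.isProbabilityMeasure_map hmeas.aemeasurable, ?_, ?_⟩
  · refine measure_mono_null (compl_subset_compl.2 (range_subset_iff.2 hptX)) ?_
    rw [Measure.map_apply hmeas (finite_range pt).measurableSet.compl]
    simp
  have := Measure.isProbabilityMeasure_map (μ := ProbabilityTheory.uniformOn univ)
    hmeas.aemeasurable
  refine log_le_shannonEntropy hwindow fun v => ?_
  rw [map_measureReal_apply hmeas (hwindow (measurableSet_singleton v)), ← preimage_comp,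
    Measure.real, ProbabilityTheory.uniformOn_univ, Measure.count_apply .of_discrete,
    Nat.card_eq_fintype_card, ENNReal.toReal_div, ENNReal.toReal_natCast, div_eq_mul_inv]
  refine mul_le_of_le_one_left (by positivity) ?_
  have hsub : (window 0 n ∘ pt ⁻¹' {v}).encard ≤ 1 :=
    encard_le_one_iff_subsingleton.2 (subsingleton_singleton.preimage hinj)
  exact ENNReal.toReal_le_of_le_ofReal zero_le_one (by simpa using ENat.toENNReal_le.2 hsub)

section Limit

variable {A ι : Type*} [TopologicalSpace A] [DiscreteTopology A] [MeasurableSpace A]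
  [BorelSpace A] {l : Filter ι} {μ : ι → ProbabilityMeasure (ℤ → A)}
  {μ' : ProbabilityMeasure (ℤ → A)}

lemma tendsto_measureReal_window_preimage [Finite A] (hμ : Tendsto μ l (𝓝 μ')) (a : ℤ) (n : ℕ)
    (s : Set (Fin n → A)) :
    Tendsto (fun k => (μ k : Measure (ℤ → A)).real (window a n ⁻¹' s)) l
      (𝓝 ((μ' : Measure (ℤ → A)).real (window a n ⁻¹' s))) := by
  have hclopen : IsClopen (window a n ⁻¹' s : Set (ℤ → A)) :=
    (isClopen_discrete s).preimage (by unfold window; fun_prop)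
  exact (ENNReal.tendsto_toReal (measure_ne_top _ _)).comp <|
    ProbabilityMeasure.tendsto_measure_of_null_frontier_of_tendsto' hμ
      (by simp [hclopen.frontier_eq])

lemma measurePreserving_shift_of_tendsto [Finite A] [l.NeBot] (hμ : Tendsto μ l (𝓝 μ'))
    (hinv : ∀ s : Set (ℤ → A), MeasurableSet s → Tendsto (fun k =>
      (μ k : Measure (ℤ → A)).real (shift ⁻¹' s) - (μ k : Measure (ℤ → A)).real s) l (𝓝 0)) :
    MeasurePreserving shift (μ' : Measure (ℤ → A)) μ' := by
  have hshift : Measurable (shift : (ℤ → A) → ℤ → A) := measurable_shiftBy 1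
  refine ⟨hshift, ext_of_map_window_eq fun a n => Measure.ext_of_singleton fun w => ?_⟩
  have hw := measurable_window (A := A) a n (measurableSet_singleton w)
  have hpre : shift ⁻¹' (window a n ⁻¹' {w}) = (window (a + 1) n ⁻¹' {w} : Set (ℤ → A)) := by
    ext x
    simp [window, shift, funext_iff, add_right_comm]
  have hlim := (tendsto_measureReal_window_preimage hμ (a + 1) n {w}).sub
    (tendsto_measureReal_window_preimage hμ a n {w})
  rw [← hpre] at hlim
  rw [Measure.map_apply (measurable_window a n) (measurableSet_singleton w),
    Measure.map_apply (measurable_window a n) (measurableSet_singleton w),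
    Measure.map_apply hshift hw, ← measureReal_eq_measureReal_iff, ← sub_eq_zero]
  exact tendsto_nhds_unique hlim (hinv _ hw)

lemma tendsto_shannonEntropy_window [Fintype A] (hμ : Tendsto μ l (𝓝 μ')) (a : ℤ) (n : ℕ) :
    Tendsto (fun k => shannonEntropy (μ k : Measure (ℤ → A)) (window a n)) l
      (𝓝 (shannonEntropy (μ' : Measure (ℤ → A)) (window a n))) :=
  tendsto_finsetSum _ fun w _ => (Real.continuous_negMulLog.tendsto _).comp
    (tendsto_measureReal_window_preimage hμ a n {w})

end Limit

variable {A : Type*} [Fintype A] [TopologicalSpace A] [DiscreteTopology A] [MeasurableSpace A]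
  [BorelSpace A] {X : Set (ℤ → A)}

/-- An invariant probability measure carried by `X` whose entropy is at least `hTop X`. Unlike a
maximum measure it need not be ergodic. -/
structure IsMaximizing (X : Set (ℤ → A)) (μ : Measure (ℤ → A)) : Prop where
  isProbabilityMeasure : IsProbabilityMeasure μ
  measurePreserving : MeasurePreserving shift μ μ
  measure_compl : μ Xᶜ = 0
  mul_hTop_le (n : ℕ) : n * hTop X ≤ blockEntropy μ n

lemma exists_measure_mul_le_shannonEntropy_add (hX : IsSubshift X) (hne : X.Nonempty) {r : ℝ}
    (hr : r < hTop X) (N : ℕ) :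
    ∃ n : ℕ, N < n ∧ ∃ μ : ProbabilityMeasure (ℤ → A), (μ : Measure (ℤ → A)) Xᶜ = 0 ∧
      (∀ s, MeasurableSet s → |(μ : Measure (ℤ → A)).real (shift ⁻¹' s) -
        (μ : Measure (ℤ → A)).real s| ≤ (n : ℝ)⁻¹) ∧
      ∀ m : ℕ, 0 < m → m ≤ n → m * r ≤ shannonEntropy (μ : Measure (ℤ → A)) (window 0 m) +
        2 * m * m * Real.log (Fintype.card A) * (n : ℝ)⁻¹ := by
  obtain ⟨n, hNn, hrn⟩ := frequently_atTop.1 (frequently_le_log_natCard_Lang hr) (N + 1)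
  have hn : n ≠ 0 := Nat.ne_zero_of_lt hNn
  obtain ⟨ν, _, hνX, hν⟩ := exists_measure_log_natCard_Lang_le hX.2 hne n
  have hprob := isProbabilityMeasure_orbitAverage (ν := ν) hn
  have hXinv (t : ℤ) : shiftBy t ⁻¹' Xᶜ = Xᶜ := by
    ext x
    simp [shiftBy_mem_iff hX.2]
  refine ⟨n, hNn, ⟨orbitAverage ν n, hprob⟩,
    orbitAverage_apply_eq_zero hX.1.measurableSet.compl hXinv hνX n,
    fun s hs => abs_measureReal_preimage_shift_sub_orbitAverage_le n hs, fun m hm hmn => ?_⟩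
  have hn' : (0 : ℝ) < n := by positivity
  have hsum := mul_shannonEntropy_window_le (ν := ν) hm hmn
  have hle : m * (r * n) ≤ m * shannonEntropy ν (window 0 n) := by gcongr; exact hrn.trans hν
  refine le_of_mul_le_mul_right ?_ hn'
  rw [ProbabilityMeasure.coe_mk, add_mul, inv_mul_cancel_right₀ hn'.ne']
  linarith [sum_shannonEntropy_window_le_orbitAverage (ν := ν) hn m]

theorem exists_isMaximizing (hX : IsSubshift X) (hne : X.Nonempty) :
    ∃ μ : Measure (ℤ → A), IsMaximizing X μ := by
  choose n hkn μ hμX hμinv hμ using fun k : ℕ => exists_measure_mul_le_shannonEntropy_add hX hne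
    (sub_lt_self (hTop X) (by positivity : 0 < ((k : ℝ) + 1)⁻¹)) k
  obtain ⟨μ', -, hμ'⟩ := (isCompact_univ (X := ProbabilityMeasure (ℤ → A))).ultrafilter_le_nhds
    ((hyperfilter ℕ).map μ) (by simp)
  have hlim : Tendsto μ (hyperfilter ℕ) (𝓝 μ') := hμ'
  have hyper : (hyperfilter ℕ : Filter ℕ) ≤ atTop :=
    Nat.cofinite_eq_atTop ▸ hyperfilter_le_cofinite
  have hn0 : Tendsto (fun k => (n k : ℝ)⁻¹) (hyperfilter ℕ) (𝓝 0) :=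
    (tendsto_inv_atTop_nhds_zero_nat.comp
      (tendsto_atTop_mono (fun k => (hkn k).le) tendsto_id)).mono_left hyper
  refine ⟨μ', inferInstance, measurePreserving_shift_of_tendsto hlim fun s hs =>
    squeeze_zero_norm (fun k => hμinv k s hs) hn0, ?_, fun m => ?_⟩
  · simpa [hμX] using
      ProbabilityMeasure.le_liminf_measure_open_of_tendsto hlim hX.1.isOpen_compl
  · rw [blockEntropy_eq]
    rcases m.eq_zero_or_pos with rfl | hm
    · simpa using shannonEntropy_nonneg (window 0 0)
    have hk0 : Tendsto (fun k : ℕ => ((k : ℝ) + 1)⁻¹) (hyperfilter ℕ) (𝓝 0) := by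
      simpa only [one_div] using (tendsto_one_div_add_atTop_nhds_zero_nat (𝕜 := ℝ)).mono_left hyper
    have hright := (tendsto_shannonEntropy_window hlim 0 m).add
      (hn0.const_mul (2 * m * m * Real.log (Fintype.card A)))
    have hleft := (hk0.const_sub (hTop X)).const_mul (m : ℝ)
    rw [mul_zero, add_zero] at hright
    rw [sub_zero] at hleft
    refine le_of_tendsto_of_tendsto hleft hright ?_
    filter_upwards [hyper (eventually_ge_atTop m)] with k hmk
    exact hμ k m hm (hmk.trans (hkn k).le)

end Misiurewicz

/-! ### Maximizing measures are carried by finitely many state orbits -/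

section Cond

open scoped ProbabilityTheory

variable {Ω : Type*} [MeasurableSpace Ω] {μ : Measure Ω} {f : Ω → Ω} {D : Set Ω}

lemma measurePreserving_cond (hf : MeasurePreserving f μ μ) (hD : MeasurableSet D)
    (hinv : f ⁻¹' D = D) : MeasurePreserving f (μ[|D]) (μ[|D]) := by
  have := hf.restrict_preimage hD
  rw [hinv] at this
  exact this.smul_measure _

lemma cond_eq_self_of_measure_compl_eq_zero [IsProbabilityMeasure μ] (h : μ Dᶜ = 0) :
    μ[|D] = μ := by
  rw [ProbabilityTheory.cond, Measure.restrict_eq_self_of_ae_mem (compl_mem_ae_iff.1 (by simpa)),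
    measure_of_measure_compl_eq_zero h, measure_univ, inv_one, one_smul]

lemma measureReal_eq_mul_cond_add [IsFiniteMeasure μ] (hD : MeasurableSet D) (s : Set Ω) :
    μ.real s = μ.real D * (μ[|D]).real s + μ.real Dᶜ * (μ[|Dᶜ]).real s := by
  rw [measureReal_def, ← ProbabilityTheory.cond_add_cond_compl_eq hD μ, ENNReal.toReal_add
    (by finiteness) (by finiteness), ENNReal.toReal_mul, ENNReal.toReal_mul]
  simp only [measureReal_def, mul_comm]

lemma ergodic_of_forall_cond_eq_cond_compl [IsFiniteMeasure μ] (hf : MeasurePreserving f μ μ)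
    (h : ∀ D, MeasurableSet D → f ⁻¹' D = D → μ D ≠ 0 → μ Dᶜ ≠ 0 → μ[|D] = μ[|Dᶜ]) :
    Ergodic f μ := by
  refine ⟨hf, ⟨fun D hD hinv => eventuallyConst_set'.2 ?_⟩⟩
  by_contra! hne
  have h0 : μ D ≠ 0 := fun h0 => hne.1 (ae_eq_empty.2 h0)
  have heq := congrArg (fun ν => ν D) (h D hD hinv h0 fun h1 => hne.2 (ae_eq_univ.2 h1))
  simp only [ProbabilityTheory.cond_apply hD, ProbabilityTheory.cond_apply hD.compl, inter_self,
    compl_inter_self, measure_empty, mul_zero] at heq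
  rw [ENNReal.inv_mul_cancel h0 (measure_ne_top μ D)] at heq
  exact one_ne_zero heq

end Cond

section StateOrbit

variable {A : Type*} {X : Set (ℤ → A)} {S : Set (ℕ → A)}

/-- The points whose orbit visits the state `S`. -/
def stateOrbit (X : Set (ℤ → A)) (S : Set (ℕ → A)) : Set (ℤ → A) :=
  {x | ∃ t : ℤ, shiftBy t x ∈ stateSet X S}

lemma stateSet_subset_stateOrbit (X : Set (ℤ → A)) (S : Set (ℕ → A)) :
    stateSet X S ⊆ stateOrbit X S :=
  fun x hx => ⟨0, by rwa [shiftBy_zero]⟩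

lemma preimage_shift_stateOrbit (X : Set (ℤ → A)) (S : Set (ℕ → A)) :
    shift ⁻¹' stateOrbit X S = stateOrbit X S := by
  ext x
  have hshift (t : ℤ) : shiftBy t (shift x) = shiftBy (t + 1) x := shiftBy_shiftBy _ _ _
  simp only [stateOrbit, mem_preimage, mem_ofPred_eq, hshift]
  exact (Equiv.addRight (1 : ℤ)).exists_congr fun _ => Iff.rfl

lemma measurableSet_stateOrbit [Finite A] [MeasurableSpace A] [MeasurableSingletonClass A]
    (X : Set (ℤ → A)) (S : Set (ℕ → A)) : MeasurableSet (stateOrbit X S) := by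
  simp only [stateOrbit, ofPred_exists]
  exact .iUnion fun t => measurable_shiftBy t (measurableSet_stateSet X S)

lemma ae_mem_stateOrbit_of_ergodic [Finite A] [MeasurableSpace A] [MeasurableSingletonClass A]
    {μ : Measure (ℤ → A)} [IsProbabilityMeasure μ] (hμ : Ergodic shift μ)
    (hS : μ (stateSet X S) ≠ 0) : ∀ᵐ x ∂μ, x ∈ stateOrbit X S := by
  have hmeas := measurableSet_stateOrbit X S
  refine (prob_compl_eq_zero_iff hmeas).2 ?_
  refine (hμ.prob_eq_zero_or_one hmeas (preimage_shift_stateOrbit X S)).resolve_left fun h0 => ?_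
  exact hS (measure_mono_null (stateSet_subset_stateOrbit X S) h0)

end StateOrbit

section EntropyBound

open scoped ProbabilityTheory

variable {A : Type*} [Fintype A] [MeasurableSpace A] {X : Set (ℤ → A)} {μ : Measure (ℤ → A)}

lemma shannonEntropy_window_le_log_natCard_Lang [MeasurableSingletonClass A]
    [IsProbabilityMeasure μ] (hX : shift '' X = X) (hμX : μ Xᶜ = 0) (a : ℤ) (n : ℕ) :
    shannonEntropy μ (window a n) ≤ Real.log (Nat.card (Lang X n)) := by
  classical
  have hcard : Nat.card (Lang X n) =
      (Finset.univ.filter fun w : Fin n → A => List.ofFn w ∈ Lang X n).card := by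
    rw [← Nat.card_preimage_of_injective (f := List.ofFn (n := n)) List.ofFn_injective,
      Nat.card_eq_fintype_card, ← Fintype.card_subtype]
    · rfl
    · rintro u ⟨rfl, -⟩
      exact ⟨u.get, List.ofFn_get u⟩
  rw [hcard]
  refine shannonEntropy_le_log_card (measurable_window a n) ?_
  filter_upwards [compl_mem_ae_iff.2 hμX] with x hx
  exact Finset.mem_filter.2 ⟨Finset.mem_univ _, block_mem_Lang hX (not_not.1 hx) a n⟩

lemma eventually_shannonEntropy_window_le [MeasurableSingletonClass A] (hX : shift '' X = X)
    {r : ℝ} (hr : hTop X < r) :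
    ∀ᶠ n : ℕ in atTop, ∀ μ : Measure (ℤ → A), IsProbabilityMeasure μ → μ Xᶜ = 0 →
      ∀ a, shannonEntropy μ (window a n) ≤ r * n := by
  filter_upwards [eventually_natCard_Lang_le_exp hr] with n hn μ _ hμX a
  refine (shannonEntropy_window_le_log_natCard_Lang hX hμX a n).trans ?_
  rcases (Nat.card (Lang X n)).eq_zero_or_pos with h0 | h0
  · rw [h0, Nat.cast_zero, Real.log_zero]
    exact mul_nonneg ((hTop_nonneg X).trans hr.le) n.cast_nonneg
  · exact (Real.log_le_iff_le_exp (Nat.cast_pos.2 h0)).2 hn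

lemma KSEntropy_mul_le [IsProbabilityMeasure μ] (n : ℕ) :
    n * KSEntropy μ ≤ blockEntropy μ n := by
  have hnonneg (k : ℕ) : 0 ≤ blockEntropy μ k := by
    rw [blockEntropy_eq]
    exact shannonEntropy_nonneg _
  rcases n with _ | n
  · simpa using hnonneg 0
  · have hbdd : BddBelow (range fun k : ℕ => blockEntropy μ (k + 1) / ((k : ℝ) + 1)) :=
      ⟨0, forall_mem_range.2 fun k => div_nonneg (hnonneg _) (by positivity)⟩
    rw [← le_div_iff₀' (by positivity), Nat.cast_succ]
    exact ciInf_le hbdd n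

/-- The two components have entropies averaging to that of `μ`, and neither exceeds `hTop X`. -/
lemma mul_hTop_le_of_mixture [MeasurableSingletonClass A] {μ₁ μ₂ : Measure (ℤ → A)}
    [IsProbabilityMeasure μ₁] [IsProbabilityMeasure μ₂] (hX : shift '' X = X)
    (hμ₁ : MeasurePreserving shift μ₁ μ₁) (hμ₂ : μ₂ Xᶜ = 0) {a b : ℝ} (ha : 0 < a) (hb : 0 ≤ b)
    (hab : a + b = 1) (hmix : ∀ s, MeasurableSet s → μ.real s = a * μ₁.real s + b * μ₂.real s)
    (hμ : ∀ n : ℕ, n * hTop X ≤ blockEntropy μ n) (n : ℕ) : n * hTop X ≤ blockEntropy μ₁ n := by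
  by_contra! hlt
  set δ := a * (n * hTop X - blockEntropy μ₁ n)
  have hδ : 0 < δ := mul_pos ha (sub_pos.2 hlt)
  have hn : 0 < n := by
    refine n.pos_of_ne_zero fun hn => hlt.not_ge ?_
    rw [hn, Nat.cast_zero, zero_mul, blockEntropy_eq]
    exact shannonEntropy_nonneg _
  have hblocks (k : ℕ) : shannonEntropy μ₁ (window 0 (k * n)) ≤ k * blockEntropy μ₁ n := by
    simpa [← blockEntropy_eq_window hμ₁] using shannonEntropy_window_mul_le (μ := μ₁) 0 n k
  have hhalf : hTop X < hTop X + δ / (2 * n) := lt_add_of_pos_right _ (by positivity)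
  obtain ⟨k, hk, hkδ⟩ := (((tendsto_id.atTop_mul_const' hn).eventually
    (eventually_shannonEntropy_window_le hX hhalf)).and
    ((tendsto_natCast_atTop_atTop.atTop_mul_const (half_pos hδ)).eventually_gt_atTop
      (Real.negMulLog a + Real.negMulLog b))).exists
  have hupper : b * shannonEntropy μ₂ (window 0 (k * n)) ≤ b * (k * (n * hTop X)) + k * (δ / 2) :=
    calc b * shannonEntropy μ₂ (window 0 (k * n))
        ≤ b * ((hTop X + δ / (2 * n)) * (k * n : ℕ)) := by gcongr; exact hk μ₂ ‹_› hμ₂ 0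
      _ = b * (k * (n * hTop X)) + b * (k * (δ / 2)) := by push_cast; field_simp
      _ ≤ _ := add_le_add_right (mul_le_of_le_one_left (by positivity) (by linarith)) _
  have hlower := hμ (k * n)
  rw [blockEntropy_eq, Nat.cast_mul] at hlower
  have hmixture := shannonEntropy_le_mixture ha.le hb (measurable_window 0 (k * n)) hmix
  have hfirst := mul_le_mul_of_nonneg_left (hblocks k) ha.le
  obtain rfl : b = 1 - a := by linarith
  linarith [show k * δ = k * (a * (n * hTop X - blockEntropy μ₁ n)) from rfl]

lemma IsMaximizing.follower_nonempty {w : List A} (hX : shift '' X = X)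
    (hμ : IsMaximizing X μ) (hw : μ (stateSet X (fol X w)) ≠ 0) : (fol X w).Nonempty := by
  by_contra hempty
  refine hw (measure_mono_null (t := Xᶜ) (fun x hx hxX => hempty ?_) hμ.measure_compl)
  exact nonempty_of_mem_stateSet hX hxX hx

variable [TopologicalSpace A] [DiscreteTopology A] [BorelSpace A]

lemma isMaxMeasure_iff (hX : IsSubshift X) :
    IsMaxMeasure X μ ↔ IsMaximizing X μ ∧ Ergodic shift μ := by
  constructor
  · rintro ⟨_, hμX, hμ, hKS⟩
    exact ⟨⟨inferInstance, hμ.toMeasurePreserving, hμX, hKS ▸ KSEntropy_mul_le⟩, hμ⟩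
  · rintro ⟨⟨_, -, hμX, hlow⟩, herg⟩
    refine ⟨inferInstance, hμX, herg, le_antisymm ?_ (le_ciInf fun n => ?_)⟩
    · refine le_of_forall_gt_imp_ge_of_dense fun r hr => ?_
      obtain ⟨n, hn, hn0⟩ := ((eventually_shannonEntropy_window_le hX.2 hr).and
        (eventually_gt_atTop 0)).exists
      refine le_of_mul_le_mul_left ((KSEntropy_mul_le n).trans ?_) (Nat.cast_pos.2 hn0)
      rw [blockEntropy_eq, mul_comm]
      exact hn μ inferInstance hμX 0
    · rw [le_div_iff₀' (by positivity)]
      exact_mod_cast hlow (n + 1)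

lemma IsMaximizing.cond (hX : IsSubshift X) (hμ : IsMaximizing X μ) {D : Set (ℤ → A)}
    (hD : MeasurableSet D) (hinv : shift ⁻¹' D = D) (h0 : μ D ≠ 0) : IsMaximizing X (μ[|D]) := by
  have := hμ.isProbabilityMeasure
  by_cases h1 : μ Dᶜ = 0
  · rwa [cond_eq_self_of_measure_compl_eq_zero h1]
  have hprob := ProbabilityTheory.cond_isProbabilityMeasure h0
  have hprob' := ProbabilityTheory.cond_isProbabilityMeasure h1
  have hcond := measurePreserving_cond hμ.measurePreserving hD hinv
  have hcarried {E : Set (ℤ → A)} : μ[|E] Xᶜ = 0 :=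
    ProbabilityTheory.cond_absolutelyContinuous hμ.measure_compl
  exact ⟨hprob, hcond, hcarried, mul_hTop_le_of_mixture hX.2 hcond hcarried
    (ENNReal.toReal_pos h0 (measure_ne_top μ D)) measureReal_nonneg
    (by rw [← measureReal_def, probReal_add_probReal_compl hD])
    (fun s _ => measureReal_eq_mul_cond_add hD s) hμ.mul_hTop_le⟩

end EntropyBound

section FinitelyMany

open scoped ProbabilityTheory

variable {A : Type*} [Fintype A] [TopologicalSpace A] [DiscreteTopology A] [MeasurableSpace A]
  [BorelSpace A] {X : Set (ℤ → A)} {μ ν : Measure (ℤ → A)} {w : List A}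

lemma IsMaximizing.eq_of_ae_mem_stateOrbit (hX : shift '' X = X) (hw : (fol X w).Nonempty)
    (hμ : IsMaximizing X μ) (hν : IsMaximizing X ν) (hμw : ∀ᵐ x ∂μ, x ∈ stateOrbit X (fol X w))
    (hνw : ∀ᵐ x ∂ν, x ∈ stateOrbit X (fol X w)) : μ = ν := by
  have := hμ.isProbabilityMeasure
  have := hν.isProbabilityMeasure
  exact eq_of_ae_exists_shiftBy_mem_stateSet hX hw hμ.measurePreserving hν.measurePreserving
    hμw hνw hμ.mul_hTop_le hν.mul_hTop_le

lemma IsMaximizing.ergodic_of_ae_mem_stateOrbit (hX : IsSubshift X) (hw : (fol X w).Nonempty)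
    (hμ : IsMaximizing X μ) (hμw : ∀ᵐ x ∂μ, x ∈ stateOrbit X (fol X w)) : Ergodic shift μ := by
  have := hμ.isProbabilityMeasure
  have hae {D : Set (ℤ → A)} : ∀ᵐ x ∂μ[|D], x ∈ stateOrbit X (fol X w) :=
    ProbabilityTheory.cond_absolutelyContinuous.ae_le hμw
  exact ergodic_of_forall_cond_eq_cond_compl hμ.measurePreserving fun D hD hinv h0 h1 =>
    (hμ.cond hX hD hinv h0).eq_of_ae_mem_stateOrbit hX.2 hw
      (hμ.cond hX hD.compl (by rw [preimage_compl, hinv]) h1) hae hae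

lemma IsMaximizing.isMaxMeasure_cond_stateOrbit (hX : IsSubshift X) (hμ : IsMaximizing X μ)
    (hw : μ (stateSet X (fol X w)) ≠ 0) : IsMaxMeasure X (μ[|stateOrbit X (fol X w)]) := by
  have := hμ.isProbabilityMeasure
  have hS := measurableSet_stateOrbit X (fol X w)
  have hcond := hμ.cond hX hS (preimage_shift_stateOrbit X _)
    fun h0 => hw (measure_mono_null (stateSet_subset_stateOrbit X _) h0)
  exact (isMaxMeasure_iff hX).2 ⟨hcond, hcond.ergodic_of_ae_mem_stateOrbit hX
    (hμ.follower_nonempty hX.2 hw) (ProbabilityTheory.ae_cond_mem hS)⟩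

lemma exists_forall_isMaximizing_measure_stateSet_ne_zero (hX : shift '' X = X)
    (h : hC X < hTop X) : ∃ N : ℕ, ∀ μ, IsMaximizing X μ →
      ∃ w : List A, w.length = N ∧ μ (stateSet X (fol X w)) ≠ 0 := by
  obtain ⟨s, hs, hsh⟩ := exists_between h
  obtain ⟨N, hN⟩ := exists_tsum_expWeight_le_of_hC_lt hs
  refine ⟨N, fun μ hμ => ?_⟩
  have := hμ.isProbabilityMeasure
  exact exists_measure_stateSet_ne_zero hX hμ.measurePreserving hμ.measure_compl
    ((hC_nonneg X).trans hs.le) hsh hN hμ.mul_hTop_le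

theorem exists_isMaxMeasure_of_hC_lt_hTop (hX : IsSubshift X) (h : hC X < hTop X) :
    ∃ μ, IsMaxMeasure X μ := by
  have hne : X.Nonempty := nonempty_iff_ne_empty.2 fun hempty =>
    ((hC_nonneg X).trans_lt h).ne' (hempty ▸ hTop_empty)
  obtain ⟨μ, hμ⟩ := exists_isMaximizing hX hne
  obtain ⟨N, hN⟩ := exists_forall_isMaximizing_measure_stateSet_ne_zero hX.2 h
  obtain ⟨w, -, hw⟩ := hN μ hμ
  exact ⟨_, hμ.isMaxMeasure_cond_stateOrbit hX hw⟩

theorem finite_setOf_isMaxMeasure_of_hC_lt_hTop (hX : IsSubshift X) (h : hC X < hTop X) :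
    {μ | IsMaxMeasure X μ}.Finite := by
  obtain ⟨N, hN⟩ := exists_forall_isMaximizing_measure_stateSet_ne_zero hX.2 h
  have hmax {μ} (hμ : IsMaxMeasure X μ) : IsMaximizing X μ := ((isMaxMeasure_iff hX).1 hμ).1
  choose! f hlength hf using hN
  have hae {μ} (hμ : IsMaxMeasure X μ) : ∀ᵐ x ∂μ, x ∈ stateOrbit X (fol X (f μ)) :=
    have := hμ.1
    ae_mem_stateOrbit_of_ergodic hμ.2.2.1 (hf μ (hmax hμ))
  refine .of_injOn (f := f) (t := {w | w.length = N}) (fun μ hμ => hlength μ (hmax hμ)) ?_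
    (List.finite_length_eq A N)
  intro μ hμ ν hν heq
  exact (hmax hμ).eq_of_ae_mem_stateOrbit hX.2 ((hmax hμ).follower_nonempty hX.2 (hf μ (hmax hμ)))
    (hmax hν) (hae hμ) (heq ▸ hae hν)

end FinitelyMany

/-! ### Time reversal -/

section Reflect

variable {A : Type*} {X : Set (ℤ → A)}

/-- The time reversal `n ↦ x (-n)`, which carries `X` to `rev X`. -/
def reflect (x : ℤ → A) : ℤ → A := fun n => x (-n)

lemma reflect_involutive : Function.Involutive (reflect : (ℤ → A) → ℤ → A) := fun x => by
  funext n
  exact congrArg x (neg_neg n)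

lemma rev_eq_preimage (X : Set (ℤ → A)) : rev X = reflect ⁻¹' X :=
  congrFun reflect_involutive.image_eq_preimage_symm X

lemma rev_rev (X : Set (ℤ → A)) : rev (rev X) = X := by
  rw [rev_eq_preimage, rev_eq_preimage, preimage_preimage]
  simp [reflect_involutive _]

lemma shift_reflect (x : ℤ → A) : shift (reflect x) = reflect (shiftBy (-1) x) := by
  funext n
  exact congrArg x (neg_add n 1)

lemma image_shift_rev (hX : shift '' X = X) : shift '' rev X = rev X := by
  have hcancel (x : ℤ → A) : shiftBy (-1) (shift x) = x :=
    (shiftBy_shiftBy (-1) 1 x).trans (by simp)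
  have himage : shiftBy (-1) '' X = X := by
    conv_lhs => rw [← hX, image_image]
    simp only [hcancel, image_id']
  change shift '' (reflect '' X) = reflect '' X
  rw [image_image]
  simp only [shift_reflect]
  rw [← image_image reflect, himage]

lemma isSubshift_rev [TopologicalSpace A] (hX : IsSubshift X) : IsSubshift (rev X) :=
  ⟨rev_eq_preimage X ▸ hX.1.preimage (continuous_pi fun n => continuous_apply (-n)),
    image_shift_rev hX.2⟩

lemma window_reflect (x : ℤ → A) (n : ℕ) :
    window 0 n (reflect x) = window (1 - n) n x ∘ Fin.rev := by
  funext i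
  simp only [window, reflect, Function.comp_apply, Fin.val_rev]
  congr 1
  omega

lemma block_reflect (x : ℤ → A) (n : ℕ) : block (reflect x) 0 n = (past x n).reverse := by
  rw [past, block, block, window_reflect]
  refine List.ext_getElem (by simp) fun i _ _ => ?_
  simp only [List.getElem_reverse, List.getElem_ofFn, List.length_ofFn, Function.comp_apply]
  congr 1
  ext
  simp only [Fin.val_rev]
  omega

lemma Lang_rev_subset (hX : shift '' X = X) (n : ℕ) :
    Lang (rev X) n ⊆ List.reverse '' Lang X n := by
  intro w hw
  obtain ⟨-, _, ⟨x, hx, rfl⟩, rfl⟩ := mem_Lang_iff.1 hw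
  exact ⟨past x n, block_mem_Lang hX hx _ n, (block_reflect x n).symm⟩

lemma hTop_rev (hX : shift '' X = X) : hTop (rev X) = hTop X := by
  have hLang (n : ℕ) : Lang (rev X) n = List.reverse '' Lang X n := by
    refine (Lang_rev_subset hX n).antisymm ?_
    have := image_mono (f := List.reverse) (Lang_rev_subset (image_shift_rev hX) n)
    rwa [rev_rev, image_image, image_congr' List.reverse_reverse, image_id'] at this
  simp only [hTop, hLang, Nat.card_image_of_injective List.reverse_injective]

section Measure

variable [MeasurableSpace A] {μ : Measure (ℤ → A)}

lemma measurable_reflect : Measurable (reflect : (ℤ → A) → ℤ → A) :=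
  measurable_pi_lambda _ fun _ => measurable_pi_apply _

lemma map_reflect_involutive :
    Function.Involutive fun μ : Measure (ℤ → A) => μ.map reflect := fun μ => by
  simp only [Measure.map_map measurable_reflect measurable_reflect,
    reflect_involutive.comp_self, Measure.map_id]

lemma ergodic_map_reflect (hμ : Ergodic shift μ) : Ergodic shift (μ.map reflect) := by
  have hsymm : Ergodic (shiftBy (-1)) μ :=
    coe_shiftEquiv_symm (A := A) ▸ Ergodic.symm (e := shiftEquiv) (coe_shiftEquiv (A := A) ▸ hμ)
  exact MeasurePreserving.ergodic_of_ergodic_semiconj ⟨measurable_reflect, rfl⟩ hsymm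
    (measurable_shiftBy 1) fun x => (shift_reflect x).symm

variable [Fintype A]

lemma blockEntropy_map_reflect [MeasurableSingletonClass A] (hμ : MeasurePreserving shift μ μ)
    (n : ℕ) : blockEntropy (μ.map reflect) n = blockEntropy μ n :=
  calc blockEntropy (μ.map reflect) n
      = shannonEntropy (μ.map reflect) (window 0 n) := blockEntropy_eq _ n
    _ = shannonEntropy μ (window 0 n ∘ reflect) :=
        (shannonEntropy_comp_measurePreserving ⟨measurable_reflect, rfl⟩
          (measurable_window 0 n)).symm
    _ = shannonEntropy μ (Equiv.arrowCongr Fin.revPerm (Equiv.refl A) ∘ window (1 - n) n) :=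
        congrArg _ (funext fun x => window_reflect x n)
    _ = blockEntropy μ n := by rw [shannonEntropy_equiv_comp, blockEntropy_eq_window hμ]

lemma IsMaxMeasure.map_reflect [MeasurableSingletonClass A] (hX : shift '' X = X)
    (hμ : IsMaxMeasure X μ) : IsMaxMeasure (rev X) (μ.map reflect) := by
  obtain ⟨_, hμX, herg, hKS⟩ := hμ
  have hcompl : reflect ⁻¹' (rev X)ᶜ = Xᶜ := by
    rw [preimage_compl, ← rev_eq_preimage, rev_rev]
  have hmap := (MeasurableEquiv.ofInvolutive _ reflect_involutive measurable_reflect).map_apply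
    (μ := μ) (rev X)ᶜ
  refine ⟨Measure.isProbabilityMeasure_map measurable_reflect.aemeasurable,
    hmap.trans (hcompl ▸ hμX), ergodic_map_reflect herg, ?_⟩
  simp only [KSEntropy, blockEntropy_map_reflect herg.toMeasurePreserving, hTop_rev hX, ← hKS]

lemma image_map_reflect_setOf_isMaxMeasure [MeasurableSingletonClass A] (hX : shift '' X = X) :
    (fun μ => μ.map reflect) '' {μ | IsMaxMeasure (rev X) μ} = {μ | IsMaxMeasure X μ} := by
  refine Subset.antisymm (image_subset_iff.2 fun μ hμ => ?_) fun μ hμ => ?_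
  · exact rev_rev X ▸ IsMaxMeasure.map_reflect (image_shift_rev hX) hμ
  · exact ⟨_, hμ.map_reflect hX, map_reflect_involutive μ⟩

end Measure

end Reflect

/-- A subshift of quasi-finite type admits at least one and
at most finitely many maximum measures. -/
theorem qft_finitely_many_max_measures
    {A : Type*} [Fintype A] [TopologicalSpace A] [DiscreteTopology A]
    [MeasurableSpace A] [BorelSpace A]
    (X : Set (ℤ → A)) (h : IsQFT X) :
    {μ : Measure (ℤ → A) | IsMaxMeasure X μ}.Nonempty ∧
    {μ : Measure (ℤ → A) | IsMaxMeasure X μ}.Finite := by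
  obtain ⟨hX, hlt⟩ := h
  rcases min_lt_iff.1 hlt with hC_lt | hC_rev_lt
  · exact ⟨exists_isMaxMeasure_of_hC_lt_hTop hX hC_lt,
      finite_setOf_isMaxMeasure_of_hC_lt_hTop hX hC_lt⟩
  · have hlt_rev : hC (rev X) < hTop (rev X) := by rwa [hTop_rev hX.2]
    rw [← image_map_reflect_setOf_isMaxMeasure hX.2]
    exact ⟨.image _ (exists_isMaxMeasure_of_hC_lt_hTop (isSubshift_rev hX) hlt_rev),
      .image _ (finite_setOf_isMaxMeasure_of_hC_lt_hTop (isSubshift_rev hX) hlt_rev)⟩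

end QFTPaper
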